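/- arXiv:math/0210188 — 3 statements merged into one kernel-verified Lean document; each statement's English description precedes it below -/
import Mathlib

section
/- Assume 𝔤 is simple. Then every element of Tor(Γ_𝔨) has order at most 6. -/
open LieAlgebra

section CombinatorialDefs

variable {V : Type*} [AddCommGroup V] [Module ℂ V]

/-- `P` is a closed symmetric subsystem of `Ω`: `P ⊆ Ω`, `P = -P`, and `P` is closed
under addition within `Ω`. -/
def IsClosedSymmetricSubsystem (Ω P : Set V) : Prop :=
  P ⊆ Ω ∧ (∀ a ∈ P, -a ∈ P) ∧ ∀ a ∈ P, ∀ b ∈ P, a + b ∈ Ω → a + b ∈ P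

/-- `Pi` is a system of simple roots of `Q`: a linearly independent subset of `Q` such that
every element of `Q` is an integral linear combination of elements of `Pi` with coefficients
all nonnegative or all nonpositive. -/
def IsSimpleSystem (Q Pi : Set V) : Prop :=
  Pi ⊆ Q ∧ LinearIndependent ℂ (Subtype.val : Pi → V) ∧
    ∀ q ∈ Q, ∃ c : V →₀ ℤ, (c.support : Set V) ⊆ Pi ∧
      q = c.sum (fun v n => n • v) ∧ ((∀ v, 0 ≤ c v) ∨ (∀ v, c v ≤ 0))

/-- The Levi procedure: `Q' = ℤΣ ∩ Q` for a subset `Sig` of a system of simple roots of `Q`. -/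
def LeviStep (Q Q' : Set V) : Prop :=
  ∃ Pi Sig : Set V, IsSimpleSystem Q Pi ∧ Sig ⊆ Pi ∧
    Q' = {q ∈ Q | q ∈ AddSubgroup.closure Sig}

/-- The Dynkin procedure: `Q'` consists of those elements of `Q` whose coefficient of `α`
in the expansion in the simple system `Pi` is divisible by `n`. -/
def DynkinStep (Q Q' : Set V) : Prop :=
  ∃ Pi : Set V, IsSimpleSystem Q Pi ∧ ∃ α ∈ Pi, ∃ n : ℕ, 0 < n ∧
    Q' = {β ∈ Q | ∃ c : V →₀ ℤ, (c.support : Set V) ⊆ Pi ∧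
      β = c.sum (fun v k => k • v) ∧ (n : ℤ) ∣ c α}

end CombinatorialDefs

section LieSetup

variable (L : Type*) [LieRing L] [LieAlgebra ℂ L] [FiniteDimensional ℂ L]
  (H : LieSubalgebra ℂ L) [H.IsCartanSubalgebra]

/-- The set `Ω` of roots of `L` with respect to the Cartan subalgebra `H`, regarded as
(nonzero) linear functionals on `H` with nonzero root space. -/
def lieRoots : Set (Module.Dual ℂ H) :=
  {α | α ≠ 0 ∧ rootSpace H ⇑α ≠ ⊥}

/-- The group `Γ_𝔨 = ℤΩ / ℤP`. -/
abbrev GammaK (P : Set (Module.Dual ℂ H)) : Type _ :=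
  AddSubgroup.closure (lieRoots L H) ⧸
    (AddSubgroup.closure P).addSubgroupOf (AddSubgroup.closure (lieRoots L H))

/-- The image `ᾱ` of a root `α` in `Γ_𝔨 = ℤΩ / ℤP`. -/
def rootImage (P : Set (Module.Dual ℂ H)) {α : Module.Dual ℂ H}
    (hα : α ∈ lieRoots L H) : GammaK L H P :=
  QuotientAddGroup.mk ⟨α, AddSubgroup.subset_closure hα⟩

/-- The subspace `𝔨 = 𝔥 ⊕ ⨁_{α ∈ P} 𝔤_α` of `L`. -/
noncomputable def lieK (P : Set (Module.Dual ℂ H)) : Submodule ℂ L :=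
  H.toSubmodule ⊔ ⨆ α ∈ P, (rootSpace H ⇑α : LieSubmodule ℂ H L).toSubmodule

/-- The subspace `𝔪 = ⨁_{γ ∈ Ω \ P} 𝔤_γ` of `L`. -/
noncomputable def lieM (P : Set (Module.Dual ℂ H)) : Submodule ℂ L :=
  ⨆ γ ∈ lieRoots L H \ P, (rootSpace H ⇑γ : LieSubmodule ℂ H L).toSubmodule

end LieSetup

section Comb
set_option linter.unusedSectionVars false
variable {I : Type*} [Fintype I] [DecidableEq I]

inductive CEdge (B : I → I → ℤ) (o : I) : I → I → Prop
  | start (v : I) : B o v ≠ 0 → CEdge B o o v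
  | step (u v w : I) : CEdge B o u v → B v w ≠ 0 → w ≠ u → CEdge B o v w

lemma CEdge.ne {B : I → I → ℤ} {o u v : I} (h : CEdge B o u v) : B u v ≠ 0 := by
  cases h <;> assumption

lemma comb_term (B : I → I → ℤ) (a : I → ℤ) (hB : ∀ i j, 0 ≤ B i j) (ha : ∀ i, 0 ≤ a i)
    (i : I) (T : Finset I) (h : 0 < ∑ j ∈ T, B i j * a j) :
    ∃ j ∈ T, 1 ≤ B i j ∧ 1 ≤ a j ∧ ∑ j ∈ T, B i j * a j = B i j * a j + ∑ k ∈ T.erase j, B i k * a k ∧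
      0 ≤ ∑ k ∈ T.erase j, B i k * a k := by
  obtain ⟨j, hj, hpos⟩ := Finset.exists_lt_of_sum_lt (s := T) (f := fun _ => (0 : ℤ))
    (g := fun j => B i j * a j) (by simpa using h)
  have h1 : B i j ≠ 0 := by rintro h; simp [h] at hpos
  have h2 : a j ≠ 0 := by rintro h; simp [h] at hpos
  refine ⟨j, hj, by have := hB i j; omega, by have := ha j; omega, ?_, ?_⟩
  · exact (Finset.add_sum_erase T (fun j => B i j * a j) hj).symm
  · exact Finset.sum_nonneg fun k _ => mul_nonneg (hB _ _) (ha _)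

lemma comb_bound (B : I → I → ℤ) (a : I → ℤ) (o : I)
    (hB : ∀ i j, 0 ≤ B i j) (hB0 : ∀ i, B i i = 0) (hsymm : ∀ i j, B i j = 0 → B j i = 0)
    (ha : ∀ i, 0 ≤ a i) (hsum : ∀ i, 2 * a i = ∑ j, B i j * a j) (ho : a o = 1)
    (hconn : ∀ S : Set I, o ∈ S → (∀ i ∈ S, ∀ j ∉ S, B i j = 0) → ∀ j ∉ S, a j = 0) :
    ∀ i, a i ≤ 6 := by
  have hnb : ∀ i j, B i j ≠ 0 → a j ≤ B i j * a j ∧ B i j * a j ≤ 2 * a i := by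
    intro i j hij
    have h1 := hB i j
    have h2 := ha j
    refine ⟨by nlinarith [show 1 ≤ B i j by omega], ?_⟩
    rw [hsum i]
    exact Finset.single_le_sum (f := fun j => B i j * a j)
      (fun k _ => mul_nonneg (hB _ _) (ha _)) (Finset.mem_univ j)
  have hnb1 : ∀ i j, B i j ≠ 0 → a i ≤ 2 * a j := by
    intro i j hij
    have := hnb j i (fun h => hij (hsymm _ _ h))
    linarith
  have hnb2 : ∀ i j k, j ≠ k → B i j ≠ 0 → B i k ≠ 0 → a j + a k ≤ 2 * a i := by
    intro i j k hjk hj hk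
    have h1 := (hnb i j hj).1
    have h2 := (hnb i k hk).1
    have : B i j * a j + B i k * a k ≤ ∑ j, B i j * a j := by
      rw [← Finset.sum_pair (f := fun j => B i j * a j) hjk]
      exact Finset.sum_le_sum_of_subset_of_nonneg (Finset.subset_univ _)
        (fun k _ _ => mul_nonneg (hB _ _) (ha _))
    rw [hsum i]; linarith
  have hdich : ∀ u v, CEdge B o u v → a v = a u + 1 ∨ a v ≤ a u := by
    intro u v h
    induction h with
    | start v hv => have := hnb o v hv; omega
    | step u v w h hvw hwu ih =>
      have := hnb2 v w u hwu hvw (fun h' => h.ne (hsymm _ _ h'))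
      omega
  have hreach : ∀ u v, CEdge B o u v → a v ≤ 1 ∨ ∃ u' v', B u' v' ≠ 0 ∧ a v' = a u' + 1 ∧ a v ≤ a v' := by
    intro u v h
    induction h with
    | start v hv =>
      rcases hdich _ _ (CEdge.start v hv) with h | h
      · exact Or.inr ⟨o, v, hv, h, le_rfl⟩
      · left; omega
    | step u v w h hvw hwu ih =>
      rcases hdich _ _ (CEdge.step u v w h hvw hwu) with h | h
      · exact Or.inr ⟨v, w, hvw, h, le_rfl⟩
      · rcases ih with ih | ⟨u', v', h1, h2, h3⟩
        · left; omega
        · exact Or.inr ⟨u', v', h1, h2, by omega⟩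
  have hall : ∀ v, a v ≤ 1 ∨ ∃ u' v', B u' v' ≠ 0 ∧ a v' = a u' + 1 ∧ a v ≤ a v' := by
    intro v
    by_cases hv : v = o ∨ ∃ u, CEdge B o u v
    · rcases hv with rfl | ⟨u, hu⟩
      · left; omega
      · exact hreach u v hu
    · left
      have := hconn {v | v = o ∨ ∃ u, CEdge B o u v} (Or.inl rfl) ?_ v hv
      · omega
      · intro i hi j hj
        by_contra hij
        apply hj
        rcases hi with rfl | ⟨u, hu⟩
        · exact Or.inr ⟨i, CEdge.start j hij⟩
        · by_cases hju : j = u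
          · subst hju
            cases hu with
            | start _ _ => exact Or.inl rfl
            | step u v w h _ _ => exact Or.inr ⟨_, h⟩
          · exact Or.inr ⟨i, CEdge.step u i j hu hij hju⟩
  obtain ⟨vm, -, hmax⟩ := Finset.exists_max_image Finset.univ a ⟨o, Finset.mem_univ o⟩
  by_contra! hcon
  obtain ⟨i0, hi0⟩ := hcon
  have hM0 := hmax i0 (Finset.mem_univ _)
  rcases hall vm with h | ⟨u, v, huv, hav, hle⟩
  · omega
  have hMv : ∀ j, a j ≤ a v := fun j => (hmax j (Finset.mem_univ j)).trans hle
  have hM : 7 ≤ a v := by have := hMv i0; omega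
  have hvu : B v u ≠ 0 := fun h => huv (hsymm _ _ h)
  have hvu1 : 1 ≤ B v u := by have := hB v u; omega
  -- neighbours
  have hlow : ∀ j, 1 ≤ B v j → a v ≤ 2 * a j := fun j hj => hnb1 v j (by omega)
  have hS0 : 2 * a v = B v u * a u + ∑ k ∈ Finset.univ.erase u, B v k * a k := by
    rw [hsum v, ← Finset.add_sum_erase _ (fun j => B v j * a j) (Finset.mem_univ u)]
  -- final contradiction
  have hfin : ∀ x, 1 ≤ B v x → a v + 1 ≤ 2 * a x → 2 * a x ≤ a v + 2 → False := by
    intro x hx h1 h2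
    have hxv : B x v ≠ 0 := fun h => by have := hsymm _ _ h; omega
    have hxv1 : 1 ≤ B x v := by have := hB x v; omega
    have hS : 2 * a x = B x v * a v + ∑ k ∈ Finset.univ.erase v, B x k * a k := by
      rw [hsum x, ← Finset.add_sum_erase _ (fun j => B x j * a j) (Finset.mem_univ v)]
    have hR : 0 ≤ ∑ k ∈ Finset.univ.erase v, B x k * a k :=
      Finset.sum_nonneg fun k _ => mul_nonneg (hB _ _) (ha _)
    have hb : B x v = 1 := by nlinarith
    rw [hb] at hS
    obtain ⟨w, -, hw1, hw2, hw3, hw4⟩ := comb_term B a hB ha x _ (show 0 < ∑ k ∈ Finset.univ.erase v, B x k * a k by linarith)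
    have h5 := hnb1 x w (by omega)
    have h6 := (hnb x w (by omega)).1
    omega
  have hbu : B v u = 1 ∨ B v u = 2 := by
    have hR : 0 ≤ ∑ k ∈ Finset.univ.erase u, B v k * a k :=
      Finset.sum_nonneg fun k _ => mul_nonneg (hB _ _) (ha _)
    have : B v u < 3 := by nlinarith
    omega
  obtain ⟨j, hj, hj1, hj2, hj3, hj4⟩ := comb_term B a hB ha v _
    (show 0 < ∑ k ∈ Finset.univ.erase u, B v k * a k by rcases hbu with h | h <;> rw [h] at hS0 <;> linarith)
  have hjl := hlow j hj1
  have hjm := hMv j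
  have hj6 := (hnb v j (by omega)).1
  rcases hbu with hbu | hbu
  swap
  · rw [hbu] at hS0; omega
  rw [hbu] at hS0
  have hbj : B v j = 1 ∨ B v j = 2 := by
    have : B v j < 3 := by nlinarith
    omega
  rcases hbj with hbj | hbj
  · rw [hbj] at hj3
    obtain ⟨k, hk, hk1, hk2, hk3, hk4⟩ := comb_term B a hB ha v _
      (show 0 < ∑ k ∈ (Finset.univ.erase u).erase j, B v k * a k by linarith)
    have hkl := hlow k hk1
    have hbk : B v k = 1 := by nlinarith
    rw [hbk] at hk3
    rcases hk4.eq_or_lt with h0 | h0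
    · rcases le_total (a j) (a k) with h | h
      · exact hfin k hk1 (by linarith) (by linarith)
      · exact hfin j hj1 (by linarith) (by linarith)
    · obtain ⟨l, hl, hl1, hl2, hl3, hl4⟩ := comb_term B a hB ha v _ h0
      have hll := hlow l hl1
      have := (hnb v l (by omega)).1
      linarith
  · rw [hbj] at hj3
    rcases hj4.eq_or_lt with h0 | h0
    · exact hfin j hj1 (by linarith) (by linarith)
    · obtain ⟨l, hl, hl1, hl2, hl3, hl4⟩ := comb_term B a hB ha v _ h0
      have hll := hlow l hl1
      have := (hnb v l (by omega)).1
      linarith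
end Comb
section RootPart
set_option linter.unusedSectionVars false
open RootPairing
variable {ι K M N : Type*} [Fintype ι] [Field K] [CharZero K] [AddCommGroup M] [Module K M]
  [AddCommGroup N] [Module K N] (P : RootPairing ι K M N) [P.IsCrystallographic]

lemma rp_pairing_sum {s : Finset ι} {c : ι → ℤ} {β : ι}
    (h : P.root β = ∑ j ∈ s, c j • P.root j) (i : ι) :
    P.pairingIn ℤ β i = ∑ j ∈ s, c j * P.pairingIn ℤ j i := by
  apply FaithfulSMul.algebraMap_injective ℤ K
  have := congrArg (P.coroot' i) h
  simp only [map_sum, map_zsmul, P.root_coroot'_eq_pairing] at this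
  simp only [map_sum, map_mul, P.algebraMap_pairingIn ℤ, this]
  simp [zsmul_eq_mul]

lemma rp_sign (i j : ι) : 0 ≤ P.pairingIn ℤ i j ↔ 0 ≤ P.pairingIn ℤ j i := by
  have := P.pairingIn_pairingIn_mem_set_of_isCrystallographic i j
  simp only [Set.mem_insert_iff, Prod.mk.injEq, Set.mem_singleton_iff] at this
  omega

lemma rp_zero (i j : ι) : P.pairingIn ℤ i j = 0 ↔ P.pairingIn ℤ j i = 0 := by
  have := P.pairingIn_pairingIn_mem_set_of_isCrystallographic i j
  simp only [Set.mem_insert_iff, Prod.mk.injEq, Set.mem_singleton_iff] at this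
  omega

variable {P} [P.IsReduced] [P.IsIrreducible] (b : P.Base)

lemma rp_pos (f : M →+ ℚ) (hf : ∀ i ∈ b.support, 0 < f (P.root i)) {x : M}
    (hx : x ∈ AddSubmonoid.closure (P.root '' b.support)) : 0 ≤ f x := by
  induction hx using AddSubmonoid.closure_induction with
  | mem x hx => obtain ⟨i, hi, rfl⟩ := hx; exact (hf i hi).le
  | zero => simp
  | add x y _ _ hx hy => rw [map_add]; positivity

lemma rp_coeff {x : M}
    (hx : x ∈ AddSubmonoid.closure (P.root '' b.support)) :
    ∃ c : ι → ℕ, x = ∑ j ∈ b.support, (c j : ℤ) • P.root j := by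
  classical
  induction hx using AddSubmonoid.closure_induction with
  | mem x hx =>
    obtain ⟨i, hi, rfl⟩ := hx
    refine ⟨fun j => if j = i then 1 else 0, ?_⟩
    have hi' : i ∈ b.support := hi
    rw [Finset.sum_eq_single i] <;> simp_all
  | zero => exact ⟨0, by simp⟩
  | add x y _ _ hx hy =>
    obtain ⟨c, rfl⟩ := hx
    obtain ⟨d, rfl⟩ := hy
    exact ⟨c + d, by simp [add_smul, Finset.sum_add_distrib]⟩

/-- A root is maximal if nothing above it has larger value. -/
def RPMax (f : M →+ ℚ) (β : ι) : Prop :=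
  ∀ γ, P.root γ - P.root β ∈ AddSubmonoid.closure (P.root '' b.support) →
    f (P.root γ) ≤ f (P.root β)

lemma rp_dom (f : M →+ ℚ) (hf : ∀ i ∈ b.support, 0 < f (P.root i)) {β : ι}
    (hβ : RPMax b f β) : ∀ i ∈ b.support, 0 ≤ P.pairingIn ℤ β i := by
  intro i hi
  by_contra! hneg
  obtain ⟨n, hn⟩ : ∃ n : ℕ, P.pairingIn ℤ β i = -((n : ℤ) + 1) :=
    ⟨(-P.pairingIn ℤ β i - 1).toNat, by omega⟩
  have hp : P.pairing β i = -((n : K) + 1) := by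
    rw [← P.algebraMap_pairingIn ℤ, hn]; simp
  have hr : P.root (P.reflectionPerm i β) = P.root β + (n + 1) • P.root i := by
    rw [P.root_reflectionPerm, P.reflection_apply_root, hp]
    rw [neg_smul, sub_neg_eq_add, ← Nat.cast_smul_eq_nsmul K]; simp
  have h1 := hβ (P.reflectionPerm i β) (by
    rw [hr, add_sub_cancel_left]
    exact nsmul_mem (AddSubmonoid.subset_closure (Set.mem_image_of_mem P.root (Finset.mem_coe.2 hi))) _)
  rw [hr, map_add, map_nsmul, nsmul_eq_mul] at h1
  have := hf i hi
  have : 0 < ((n + 1 : ℕ) : ℚ) * f (P.root i) := by positivity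
  linarith

lemma rp_mem (f : M →+ ℚ) (hf : ∀ i ∈ b.support, 0 < f (P.root i))
    (hf0 : ∀ i, f (P.root i) ≠ 0) {β : ι}
    (hβ : RPMax b f β) : P.root β ∈ AddSubmonoid.closure (P.root '' b.support) := by
  rcases b.root_mem_or_neg_mem β with h | h
  · exact h
  · exfalso
    have hr : P.root (P.reflectionPerm β β) = - P.root β := by simp
    have h1 := hβ (P.reflectionPerm β β) (by
      rw [hr, sub_eq_add_neg]; exact add_mem h h)
    rw [hr, map_neg] at h1
    have h2 := rp_pos b f hf h
    rw [map_neg] at h2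
    exact hf0 β (by linarith)

lemma rp_pairing_pos (f : M →+ ℚ) (hf : ∀ i ∈ b.support, 0 < f (P.root i))
    (hf0 : ∀ i, f (P.root i) ≠ 0) {β θ : ι}
    (hβ : RPMax b f β) (hθ : RPMax b f θ) : 0 < P.pairingIn ℤ θ β := by
  obtain ⟨c, hc⟩ := rp_coeff b (rp_mem b f hf hf0 hβ)
  have hdβ := rp_dom b f hf hβ
  have hdθ := rp_dom b f hf hθ
  have hnn : ∀ j ∈ b.support, 0 ≤ (c j : ℤ) * P.pairingIn ℤ j θ := fun j hj =>
    mul_nonneg (by positivity) ((rp_sign P θ j).1 (hdθ j hj))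
  have hsum := rp_pairing_sum P hc θ
  by_contra hcon
  have h0 : P.pairingIn ℤ θ β = 0 := by
    have h1 : 0 ≤ P.pairingIn ℤ β θ := hsum ▸ Finset.sum_nonneg hnn
    have := (rp_sign P β θ).1 h1
    omega
  rw [rp_zero, hsum, Finset.sum_eq_zero_iff_of_nonneg hnn] at h0
  let q : Submodule K M := Submodule.span K (P.root '' {j | j ∈ b.support ∧ c j ≠ 0})
  have hinv : ∀ i, q ∈ Module.End.invtSubmodule (P.reflection i : M →ₗ[K] M) := by
    rw [← b.forall_mem_support_invtSubmodule_iff]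
    intro i hi
    rw [Module.End.mem_invtSubmodule, Submodule.span_le]
    rintro _ ⟨j, ⟨hj, hcj⟩, rfl⟩
    have hjq : P.root j ∈ q := Submodule.subset_span ⟨j, ⟨hj, hcj⟩, rfl⟩
    change P.reflection i (P.root j) ∈ q
    rw [P.reflection_apply_root]
    by_cases hci : c i = 0
    · have hs := rp_pairing_sum P hc i
      have hle : ∀ k ∈ b.support, (c k : ℤ) * P.pairingIn ℤ k i ≤ 0 := by
        intro k hk
        by_cases hki : k = i
        · subst hki; simp [hci]
        · exact mul_nonpos_of_nonneg_of_nonpos (by positivity) (b.pairingIn_le_zero_of_ne hki hk hi)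
      have hz : ∑ k ∈ b.support, (c k : ℤ) * P.pairingIn ℤ k i = 0 :=
        le_antisymm (Finset.sum_nonpos hle) (hs ▸ hdβ i hi)
      rw [Finset.sum_eq_zero_iff_of_nonpos hle] at hz
      have := hz j hj
      have hp : P.pairingIn ℤ j i = 0 := by
        rcases mul_eq_zero.1 this with h | h
        · exact absurd (by exact_mod_cast h) hcj
        · exact h
      rw [← P.algebraMap_pairingIn ℤ, hp]
      simpa using hjq
    · exact q.sub_mem hjq (q.smul_mem _ (Submodule.subset_span ⟨i, ⟨hi, hci⟩, rfl⟩))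
  have hqle : q ≤ LinearMap.ker (P.coroot' θ) := by
    rw [Submodule.span_le]
    rintro _ ⟨j, ⟨hj, hcj⟩, rfl⟩
    simp only [SetLike.mem_coe, LinearMap.mem_ker, P.root_coroot'_eq_pairing]
    have hp : P.pairingIn ℤ j θ = 0 := by
      rcases mul_eq_zero.1 (h0 j hj) with h | h
      · exact absurd (by exact_mod_cast h) hcj
      · exact h
    rw [← P.algebraMap_pairingIn ℤ, hp, map_zero]
  have hq : q ≠ ⊥ := by
    intro hq
    apply P.ne_zero β
    have : P.root β ∈ q := by
      rw [hc]
      refine Submodule.sum_mem _ fun j hj => ?_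
      by_cases hcj : c j = 0
      · simp [hcj]
      · have hjq : P.root j ∈ q := Submodule.subset_span ⟨j, ⟨hj, hcj⟩, rfl⟩
        exact zsmul_mem hjq _
    rw [hq] at this
    simpa using this
  have htop := IsIrreducible.eq_top_of_invtSubmodule_reflection (P := P) q hinv hq
  have : P.root θ ∈ LinearMap.ker (P.coroot' θ) := hqle (htop ▸ Submodule.mem_top)
  simp [P.root_coroot'_eq_pairing] at this

lemma rp_highest (f : M →+ ℚ) (hf : ∀ i ∈ b.support, 0 < f (P.root i))
    (hf0 : ∀ i, f (P.root i) ≠ 0) [Nonempty ι] :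
    ∃ θ, RPMax b f θ ∧ ∀ β, P.root θ - P.root β ∈ AddSubmonoid.closure (P.root '' b.support) := by
  classical
  obtain ⟨θ, -, hθ⟩ := Finset.exists_max_image Finset.univ (fun i => f (P.root i)) Finset.univ_nonempty
  have hθm : RPMax b f θ := fun γ _ => hθ γ (Finset.mem_univ γ)
  refine ⟨θ, hθm, fun β => ?_⟩
  obtain ⟨γ, hγ, hmax⟩ := Finset.exists_max_image
    (Finset.univ.filter fun γ => P.root γ - P.root β ∈ AddSubmonoid.closure (P.root '' b.support))
    (fun i => f (P.root i)) ⟨β, by simp⟩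
  simp only [Finset.mem_filter, Finset.mem_univ, true_and] at hγ hmax
  have hγm : RPMax b f γ := fun δ hδ => hmax δ (by
    have := add_mem hδ hγ
    rwa [sub_add_sub_cancel] at this)
  suffices h : P.root θ - P.root γ ∈ AddSubmonoid.closure (P.root '' b.support) by
    have := add_mem h hγ
    rwa [sub_add_sub_cancel] at this
  by_cases hne : θ = γ
  · subst hne; simp
  obtain ⟨δ, hδ⟩ := P.root_sub_root_mem_of_pairingIn_pos (rp_pairing_pos b f hf hf0 hγm hθm) hne
  rw [← hδ]
  rcases b.root_mem_or_neg_mem δ with h | h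
  · exact h
  · exfalso
    have h1 := rp_pos b f hf h
    have h2 := hθ γ (Finset.mem_univ _)
    have h3 := congrArg f hδ
    rw [map_neg] at h1
    rw [map_sub] at h3
    exact hf0 δ (by linarith)
end RootPart
section Coef
open RootPairing
set_option linter.unusedSectionVars false
variable {ι K M N : Type*} [Fintype ι] [Field K] [CharZero K] [AddCommGroup M] [Module K M]
  [AddCommGroup N] [Module K N] {P : RootPairing ι K M N} [P.IsCrystallographic]
  [P.IsReduced] [P.IsIrreducible] [P.IsRootSystem] (b : P.Base)

lemma rp_nondeg {d : ι → ℤ} (h : ∀ i ∈ b.support, ∑ j ∈ b.support, d j * P.pairingIn ℤ j i = 0) :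
    ∀ j ∈ b.support, d j = 0 := by
  have hw : ∑ j ∈ b.support, d j • P.root j = 0 := by
    have hz : ∀ n : N, P.toLinearMap.flip n (∑ j ∈ b.support, d j • P.root j) = 0 := by
      intro n
      have hn : n ∈ Submodule.span K (P.coroot '' b.support) := by
        rw [b.span_coroot_support, corootSpan, IsRootSystem.span_coroot_eq_top]; trivial
      induction hn using Submodule.span_induction with
      | mem x hx =>
        obtain ⟨i, hi, rfl⟩ := hx
        have := h i hi
        have h2 := congrArg (algebraMap ℤ K) this
        simp only [map_sum, map_mul, P.algebraMap_pairingIn ℤ, map_zero] at h2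
        simp only [map_sum, map_zsmul]
        rw [← h2]
        refine Finset.sum_congr rfl fun j _ => ?_
        simp [zsmul_eq_mul]
      | zero => simp
      | add x y _ _ hx hy => rw [map_add, LinearMap.add_apply, hx, hy, add_zero]
      | smul a x _ hx => rw [map_smul, LinearMap.smul_apply, hx, smul_zero]
    apply P.toPerfPair.injective
    ext n
    simpa using hz n
  have hli := linearIndepOn_finset_iff.1 (b.linearIndepOn_root) (fun j => (d j : K)) (by
    simpa only [Int.cast_smul_eq_zsmul] using hw)
  intro j hj
  exact_mod_cast hli j hj

lemma rp_coeff_le_six (f : M →+ ℚ) (hf : ∀ i ∈ b.support, 0 < f (P.root i)) {θ : ι}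
    (hθ : RPMax b f θ) {c : ι → ℕ}
    (hc : P.root θ = ∑ j ∈ b.support, (c j : ℤ) • P.root j) :
    ∀ i ∈ b.support, c i ≤ 6 := by
  classical
  let idx : Option b.support → ι := fun x => x.elim (P.reflectionPerm θ θ) (fun j => j)
  let p : Option b.support → Option b.support → ℤ := fun x y => P.pairingIn ℤ (idx y) (idx x)
  let a : Option b.support → ℤ := fun x => x.elim 1 (fun j => (c j : ℤ))
  have hdom := rp_dom b f hf hθ
  have hroot : P.root (P.reflectionPerm θ θ) = - P.root θ := by simp
  have hneg1 : ∀ i, P.pairingIn ℤ (P.reflectionPerm θ θ) i = - P.pairingIn ℤ θ i := by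
    intro i
    apply FaithfulSMul.algebraMap_injective ℤ K
    rw [map_neg, P.algebraMap_pairingIn ℤ, P.algebraMap_pairingIn ℤ, ← P.root_coroot'_eq_pairing,
      hroot, map_neg, P.root_coroot'_eq_pairing]
  have hpsum : ∀ x, ∑ y, p x y * a y = 0 := by
    intro x
    have h1 := rp_pairing_sum P hc (idx x)
    rw [Fintype.sum_option]
    simp only [p, a, idx, Option.elim]
    rw [hneg1]
    change -P.pairingIn ℤ θ (idx x) * 1 + ∑ j : b.support, P.pairingIn ℤ j (idx x) * (c j : ℤ) = 0
    rw [h1, ← Finset.sum_coe_sort b.support]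
    simp [mul_comm]
  have hp2 : ∀ x, p x x = 2 := by
    intro x; simp [p]
  have hsy : ∀ x y, p x y = 0 → p y x = 0 := fun x y h => (rp_zero P _ _).1 h
  have hple : ∀ x y, x ≠ y → p x y ≤ 0 := by
    have key : ∀ i : b.support, p (some i) none ≤ 0 := by
      intro i
      have := hdom i i.2
      change P.pairingIn ℤ (P.reflectionPerm θ θ) i ≤ 0
      rw [hneg1]; omega
    have key2 : ∀ i : b.support, p none (some i) ≤ 0 := by
      intro i
      have h1 := key i
      rcases lt_or_ge 0 (p none (some i)) with h | h
      · have : 0 ≤ p (some i) none := (rp_sign P _ _).1 h.le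
        have := hsy (some i) none (by omega)
        omega
      · exact h
    rintro (_ | x) (_ | y) hxy
    · exact absurd rfl hxy
    · exact key2 y
    · exact key x
    · exact b.pairingIn_le_zero_of_ne (fun h => hxy (by rw [Subtype.ext h])) y.2 x.2
  let B : Option b.support → Option b.support → ℤ := fun x y => if x = y then 0 else - p x y
  have hB : ∀ x y, B x y = 2 * (if x = y then 1 else 0) - p x y := by
    intro x y
    by_cases h : x = y
    · subst h; simp [B, hp2]
    · simp [B, h]
  have := comb_bound B a none (fun x y => by
      by_cases h : x = y
      · simp [B, h]
      · have := hple x y h; simp [B, h, this]) (fun x => by simp [B]) (fun x y h => by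
      by_cases hxy : x = y
      · simp [B, hxy]
      · have h' : y ≠ x := Ne.symm hxy
        simp only [B, hxy, h', if_false, neg_eq_zero] at h ⊢
        exact hsy x y h) (fun x => by
      rcases x with _ | x
      · exact zero_le_one
      · exact Int.natCast_nonneg _) (fun x => by
      simp only [hB, sub_mul, Finset.sum_sub_distrib, hpsum]
      simp) rfl (fun S hS hBS => by
      have hpS : ∀ i ∈ S, ∀ j ∉ S, p i j = 0 := by
        intro i hi j hj
        have hij : i ≠ j := fun h => hj (h ▸ hi)
        simpa [B, hij] using hBS i hi j hj
      let d : ι → ℤ := fun j => if h : j ∈ b.support then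
        (if some ⟨j, h⟩ ∈ S then 0 else (c j : ℤ)) else 0
      have hd : ∀ j : b.support, d j = if some j ∈ S then 0 else (c j : ℤ) := by
        intro j; simp [d]
      have hd0 := rp_nondeg b (d := d) (by
        intro i hi
        rw [← Finset.sum_coe_sort b.support]
        simp only [hd]
        by_cases hiS : some ⟨i, hi⟩ ∈ S
        · refine Finset.sum_eq_zero fun j _ => ?_
          split_ifs with h
          · simp
          · have : P.pairingIn ℤ j i = 0 := hpS _ hiS _ h
            simp [this]
        · have h1 := hpsum (some ⟨i, hi⟩)
          rw [Fintype.sum_option] at h1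
          have h2 : p (some ⟨i, hi⟩) none = 0 := hsy _ _ (hpS _ hS _ hiS)
          rw [h2, zero_mul, zero_add] at h1
          refine Eq.trans ?_ h1
          refine Finset.sum_congr rfl fun j _ => ?_
          split_ifs with h
          · have : p (some ⟨i, hi⟩) (some j) = 0 := hsy _ _ (hpS _ h _ hiS)
            simp [this]
          · change (c j : ℤ) * P.pairingIn ℤ j i = P.pairingIn ℤ j i * (c j : ℤ)
            ring)
      rintro (_ | j) hj
      · exact absurd hS hj
      · have := hd0 j j.2
        rw [hd, if_neg hj] at this
        exact this)
  intro i hi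
  have := this (some ⟨i, hi⟩)
  change (c i : ℤ) ≤ 6 at this
  omega
end Coef
section MinPart
open RootPairing
set_option linter.unusedSectionVars false
variable {ι K M N : Type*} [Fintype ι] [Field K] [CharZero K] [AddCommGroup M] [Module K M]
  [AddCommGroup N] [Module K N] (P : RootPairing ι K M N) [P.IsCrystallographic]

lemma exists_rat_retract (K : Type*) [Field K] [CharZero K] : ∃ π : K →+ ℚ, ∀ z : ℤ, π z = z := by
  obtain ⟨g, hg⟩ := LinearMap.exists_leftInverse_of_injective (Algebra.linearMap ℚ K)
    (LinearMap.ker_eq_bot.2 (algebraMap ℚ K).injective)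
  refine ⟨g.toAddMonoidHom, fun z => ?_⟩
  have := LinearMap.congr_fun hg (z : ℚ)
  simpa using this

lemma rp_step (g : M →+ ℚ) (i : ι) :
    2 * ∑ j, (P.pairingIn ℤ j i : ℚ) * g (P.root j) =
      g (P.root i) * ∑ j, (P.pairingIn ℤ j i : ℚ) ^ 2 := by
  have h1 : ∀ j, P.pairingIn ℤ (P.reflectionPerm i j) i = - P.pairingIn ℤ j i := by
    intro j
    apply FaithfulSMul.algebraMap_injective ℤ K
    rw [map_neg, P.algebraMap_pairingIn ℤ, P.algebraMap_pairingIn ℤ]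
    rw [← P.pairing_reflectionPerm, P.pairing_reflectionPerm_self_right]
  have h2 : ∀ j, g (P.root (P.reflectionPerm i j)) =
      g (P.root j) - (P.pairingIn ℤ j i : ℚ) * g (P.root i) := by
    intro j
    rw [P.root_reflectionPerm, P.reflection_apply_root, map_sub, ← P.algebraMap_pairingIn ℤ]
    simp [Int.cast_smul_eq_zsmul]
  have h3 : ∑ j, (P.pairingIn ℤ (P.reflectionPerm i j) i : ℚ) * g (P.root (P.reflectionPerm i j)) =
      ∑ j, (P.pairingIn ℤ j i : ℚ) * g (P.root j) :=
    Equiv.sum_comp (P.reflectionPerm i) (fun j => (P.pairingIn ℤ j i : ℚ) * g (P.root j))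
  rw [two_mul]
  nth_rewrite 1 [← h3]
  rw [← Finset.sum_add_distrib, Finset.mul_sum]
  refine Finset.sum_congr rfl fun j _ => ?_
  rw [h1, h2]; push_cast; ring

lemma rp_minimise (g₀ : M →+ ℚ) :
    ∃ g : M →+ ℚ, (∀ i, ∃ z : ℤ, g (P.root i) = g₀ (P.root i) + z) ∧ ∀ i, g (P.root i) ≤ 1 := by
  classical
  obtain ⟨π, hπ⟩ := exists_rat_retract K
  obtain ⟨D, hD, hDi⟩ : ∃ D : ℤ, D ≠ 0 ∧ ∀ i, ∃ z : ℤ, (D : ℚ) * g₀ (P.root i) = z := by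
    refine ⟨∏ i, ((g₀ (P.root i)).den : ℤ), Finset.prod_ne_zero_iff.2 (by simp), fun i => ?_⟩
    obtain ⟨e, he⟩ := Finset.dvd_prod_of_mem (fun i => ((g₀ (P.root i)).den : ℤ)) (Finset.mem_univ i)
    refine ⟨e * (g₀ (P.root i)).num, ?_⟩
    rw [he]
    push_cast
    rw [mul_right_comm, mul_comm _ (g₀ (P.root i)), Rat.mul_den_eq_num, mul_comm]
  have hex : ∀ g : M →+ ℚ, (∀ i, ∃ z : ℤ, g (P.root i) = g₀ (P.root i) + z) →
      ∃ m : ℕ, (m : ℚ) = D ^ 2 * ∑ i, g (P.root i) ^ 2 := by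
    intro g hg
    choose z hz using hg
    choose w hw using hDi
    have : ((∑ i, (w i + D * z i) ^ 2 : ℤ) : ℚ) = D ^ 2 * ∑ i, g (P.root i) ^ 2 := by
      push_cast
      rw [Finset.mul_sum]
      refine Finset.sum_congr rfl fun i _ => ?_
      rw [hz, ← hw]; ring
    refine ⟨(∑ i, (w i + D * z i) ^ 2).toNat, ?_⟩
    rw [← this, ← Int.cast_natCast, Int.toNat_of_nonneg (Finset.sum_nonneg fun i _ => sq_nonneg _)]
  let Q : ℕ → Prop := fun m => ∃ g : M →+ ℚ,
    (∀ i, ∃ z : ℤ, g (P.root i) = g₀ (P.root i) + z) ∧ (m : ℚ) = D ^ 2 * ∑ i, g (P.root i) ^ 2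
  have hQ : ∃ m, Q m := by
    have h0 : ∀ i, ∃ z : ℤ, g₀ (P.root i) = g₀ (P.root i) + z := fun i => ⟨0, by simp⟩
    obtain ⟨m, hm⟩ := hex g₀ h0
    exact ⟨m, g₀, h0, hm⟩
  obtain ⟨g, hg, hgm⟩ := Nat.find_spec hQ
  refine ⟨g, hg, fun i => ?_⟩
  let g' : M →+ ℚ := g - π.comp (P.coroot' i).toAddMonoidHom
  have hg' : ∀ j, g' (P.root j) = g (P.root j) - P.pairingIn ℤ j i := by
    intro j
    have : P.coroot' i (P.root j) = ((P.pairingIn ℤ j i : ℤ) : K) := by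
      rw [P.root_coroot'_eq_pairing, ← P.algebraMap_pairingIn ℤ]; simp
    rw [← hπ, ← this]; rfl
  have hg'z : ∀ j, ∃ z : ℤ, g' (P.root j) = g₀ (P.root j) + z := by
    intro j
    obtain ⟨z, hz⟩ := hg j
    exact ⟨z - P.pairingIn ℤ j i, by rw [hg', hz]; push_cast; ring⟩
  obtain ⟨m, hm⟩ := hex g' hg'z
  have hle : Nat.find hQ ≤ m := Nat.find_min' hQ ⟨g', hg'z, hm⟩
  have hle' : ((Nat.find hQ : ℕ) : ℚ) ≤ m := by exact_mod_cast hle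
  rw [hgm, hm] at hle'
  have hD2 : (0 : ℚ) < (D : ℚ) ^ 2 := by positivity
  have hE := le_of_mul_le_mul_left hle' hD2
  have hst := rp_step P g i
  have hsum : ∑ j, g' (P.root j) ^ 2 = ∑ j, g (P.root j) ^ 2
      - 2 * ∑ j, (P.pairingIn ℤ j i : ℚ) * g (P.root j) + ∑ j, (P.pairingIn ℤ j i : ℚ) ^ 2 := by
    rw [Finset.mul_sum, ← Finset.sum_sub_distrib, ← Finset.sum_add_distrib]
    refine Finset.sum_congr rfl fun j _ => ?_
    rw [hg']; ring
  have hpos : 0 < ∑ j, (P.pairingIn ℤ j i : ℚ) ^ 2 := by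
    refine Finset.sum_pos' (fun j _ => sq_nonneg _) ⟨i, Finset.mem_univ _, by simp⟩
  rw [hsum, hst] at hE
  nlinarith

end MinPart
section BasePart
open RootPairing IsAddIndecomposable
set_option linter.unusedSectionVars false
variable {ι K M N : Type*} [Fintype ι] [Field K] [CharZero K] [AddCommGroup M] [Module K M]
  [AddCommGroup N] [Module K N] (P : RootPairing ι K M N) [P.IsCrystallographic]
  [P.IsReduced] [P.IsRootSystem]

lemma rp_base_of (g : M →+ ℚ) : ∃ (b : P.Base) (f : M →+ ℚ),
    (∀ i ∈ b.support, 0 < f (P.root i)) ∧ (∀ i, f (P.root i) ≠ 0) ∧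
    ∀ i ∈ b.support, 0 ≤ g (P.root i) := by
  classical
  obtain ⟨h, hh⟩ : ∃ h : M →+ ℚ, ∀ i, h (P.root i) ≠ 0 := by
    let _i : Module ℚ M := Module.compHom M (algebraMap ℚ K)
    obtain ⟨h, hh⟩ := Module.exists_dual_forall_apply_ne_zero (K := ℚ) P.root (fun i => P.ne_zero i)
    exact ⟨h.toAddMonoidHom, hh⟩
  let k : ℚ := ∑ i, |h (P.root i)| / |g (P.root i)| + 1
  have hk : ∀ i, g (P.root i) ≠ 0 → |h (P.root i)| < k * |g (P.root i)| := by
    intro i hi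
    have hi' : 0 < |g (P.root i)| := abs_pos.2 hi
    rw [← div_lt_iff₀ hi']
    have : |h (P.root i)| / |g (P.root i)| ≤ ∑ i, |h (P.root i)| / |g (P.root i)| :=
      Finset.single_le_sum (f := fun i => |h (P.root i)| / |g (P.root i)|)
        (fun i _ => by positivity) (Finset.mem_univ i)
    simp only [k]; linarith
  have hk0 : 0 < k := by
    have : 0 ≤ ∑ i, |h (P.root i)| / |g (P.root i)| := Finset.sum_nonneg fun i _ => by positivity
    simp only [k]; linarith
  let f : M →+ ℚ := (AddMonoidHom.mulLeft k).comp g + h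
  have hfv : ∀ x, f x = k * g x + h x := fun x => rfl
  have hf0 : ∀ i, f (P.root i) ≠ 0 := by
    intro i hi
    rw [hfv] at hi
    by_cases hg : g (P.root i) = 0
    · rw [hg] at hi; exact hh i (by linarith)
    · have h1 := hk i hg
      have h2 : h (P.root i) = - (k * g (P.root i)) := by linarith
      rw [h2, abs_neg, abs_mul, abs_of_pos hk0] at h1
      exact lt_irrefl _ h1
  let := P.indexNeg
  let b := Base.mk' P (baseOf P.root f) (P.linearIndepOn_root_baseOf f hf0)
    (fun i ↦ mem_or_neg_mem_closure_baseOf P.root f i (hf0 i) (by simp))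
  have hbf : ∀ i ∈ b.support, 0 < f (P.root i) := by
    intro i hi
    have : i ∈ baseOf P.root f := by simpa [b, Base.mk'] using hi
    exact this.1
  refine ⟨b, f, hbf, hf0, fun i hi => ?_⟩
  by_contra! hneg
  have h1 := hk i hneg.ne
  have h2 := hbf i hi
  rw [hfv] at h2
  rw [abs_of_neg hneg] at h1
  have := le_abs_self (h (P.root i))
  linarith
end BasePart
section MainPart
open RootPairing
set_option linter.unusedSectionVars false
variable {ι K M N : Type*} [Fintype ι] [Field K] [CharZero K] [AddCommGroup M] [Module K M]
  [AddCommGroup N] [Module K N] {P : RootPairing ι K M N} [P.IsCrystallographic]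
  [P.IsReduced] [P.IsIrreducible] [P.IsRootSystem]

lemma rp_coord (b : P.Base) {i : ι} (hi : i ∈ b.support) :
    ∃ e : M →+ ℚ, e (P.root i) = 1 ∧ ∀ j ∈ b.support, j ≠ i → e (P.root j) = 0 := by
  classical
  obtain ⟨π, hπ⟩ := exists_rat_retract K
  refine ⟨π.comp (b.toWeightBasis.coord ⟨i, hi⟩).toAddMonoidHom, ?_, ?_⟩
  · have h : P.root i = b.toWeightBasis ⟨i, hi⟩ := by simp
    have := hπ 1
    change π (b.toWeightBasis.repr (P.root i) ⟨i, hi⟩) = 1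
    rw [h, Module.Basis.repr_self, Finsupp.single_eq_same]
    simpa using this
  · intro j hj hji
    have h : P.root j = b.toWeightBasis ⟨j, hj⟩ := by simp
    have hne : (⟨j, hj⟩ : b.support) ≠ ⟨i, hi⟩ := fun h => hji (congrArg Subtype.val h)
    change π (b.toWeightBasis.repr (P.root j) ⟨i, hi⟩) = 0
    rw [h, Module.Basis.repr_self, Finsupp.single_eq_of_ne' hne, map_zero]

lemma rp_nonneg (b : P.Base) (f : M →+ ℚ) (hf : ∀ i ∈ b.support, 0 ≤ f (P.root i)) {x : M}
    (hx : x ∈ AddSubmonoid.closure (P.root '' b.support)) : 0 ≤ f x := by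
  induction hx using AddSubmonoid.closure_induction with
  | mem x hx => obtain ⟨i, hi, rfl⟩ := hx; exact hf i hi
  | zero => simp
  | add x y _ _ hx hy => rw [map_add]; positivity

lemma rp_main {S : Set M} (hSr : S ⊆ Set.range P.root) (g₀ : M →+ ℚ)
    (hS : ∀ s ∈ S, ∃ z : ℤ, g₀ s = z) {y : M} (hy : y ∈ AddSubgroup.closure (Set.range P.root))
    {n : ℕ} (hn : 1 < n) (hny : n • y ∈ AddSubgroup.closure S)
    (hord : ∀ m : ℤ, (∃ z : ℤ, m * g₀ y = z) → (n : ℤ) ∣ m) : n ≤ 6 := by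
  classical
  obtain ⟨g, hg, hg1⟩ := rp_minimise P g₀
  obtain ⟨b, f, hf, hf0, hgb⟩ := rp_base_of P g
  have hgneg : ∀ i, ∃ j, P.root j = - P.root i := fun i => ⟨P.reflectionPerm i i, by simp⟩
  have hgS : ∀ s ∈ S, ∃ z : ℤ, g s = z := by
    intro s hs
    obtain ⟨i, rfl⟩ := hSr hs
    obtain ⟨z, hz⟩ := hg i
    obtain ⟨w, hw⟩ := hS _ hs
    exact ⟨w + z, by rw [hz, hw]; push_cast; ring⟩
  have hgy : ∃ z : ℤ, g y = g₀ y + z := by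
    have hcl1 : AddSubgroup.closure (Set.range P.root) ≤
        (Int.castAddHom ℚ).range.comap (g - g₀) := by
      rw [AddSubgroup.closure_le]
      rintro _ ⟨j, rfl⟩
      obtain ⟨z, hz⟩ := hg j
      exact ⟨z, by simp [hz]⟩
    obtain ⟨z, hz⟩ := hcl1 hy
    refine ⟨z, ?_⟩
    have hz' : (z : ℚ) = g y - g₀ y := hz
    rw [hz']; ring
  have hord' : ∀ m : ℤ, (∃ z : ℤ, m * g y = z) → (n : ℤ) ∣ m := by
    rintro m ⟨z, hz⟩
    obtain ⟨w, hw⟩ := hgy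
    exact hord m ⟨z - m * w, by push_cast; rw [← hz, hw]; ring⟩
  -- a simple root on which `g` is positive
  obtain ⟨i, hi, hgi⟩ : ∃ i ∈ b.support, 0 < g (P.root i) := by
    by_contra! hcon
    have h0 : ∀ i ∈ b.support, g (P.root i) = 0 := fun i hi => le_antisymm (hcon i hi) (hgb i hi)
    have h1 : ∀ x ∈ AddSubmonoid.closure (P.root '' b.support), g x = 0 := by
      intro x hx
      have h2 := rp_nonneg b g hgb hx
      have h3 := rp_nonneg b (-g) (fun i hi => by simp [h0 i hi]) hx
      simp only [AddMonoidHom.neg_apply] at h3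
      linarith
    have h2 : ∀ i, g (P.root i) = 0 := by
      intro i
      rcases b.root_mem_or_neg_mem i with h | h
      · exact h1 _ h
      · have := h1 _ h
        rwa [map_neg, neg_eq_zero] at this
    have h3 : g y = 0 := by
      have : AddSubgroup.closure (Set.range P.root) ≤ g.ker := by
        rw [AddSubgroup.closure_le]
        rintro _ ⟨i, rfl⟩
        exact h2 i
      exact this hy
    have h4 := hord' 1 ⟨0, by simp [h3]⟩
    have h5 := Int.le_of_dvd one_pos h4
    omega
  have : Nonempty ι := ⟨i⟩
  obtain ⟨θ, hθ, hhigh⟩ := rp_highest b f hf hf0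
  obtain ⟨c, hc⟩ := rp_coeff b (rp_mem b f hf hf0 hθ)
  obtain ⟨e, hei, hej⟩ := rp_coord b hi
  have he0 : ∀ j ∈ b.support, 0 ≤ e (P.root j) := by
    intro j hj
    by_cases h : j = i
    · rw [h, hei]; exact zero_le_one
    · rw [hej j hj h]
  have heθ : e (P.root θ) = c i := by
    rw [hc, map_sum, Finset.sum_eq_single i]
    · simp [hei]
    · intro j hj hji
      simp [hej j hj hji]
    · exact fun h => absurd hi h
  have hci : 1 ≤ c i := by
    have := rp_nonneg b e he0 (hhigh i)
    rw [map_sub, heθ, hei] at this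
    have : (1 : ℚ) ≤ c i := by linarith
    exact_mod_cast this
  have h6 := rp_coeff_le_six b f hf hθ hc i hi
  -- bound `e` by `g`
  have hF : ∀ x ∈ AddSubmonoid.closure (P.root '' b.support), g x = 0 → e x = 0 := by
    intro x hx hx0
    have h1 := rp_nonneg b e he0 hx
    have h2 := rp_nonneg b (g - (AddMonoidHom.mulLeft (g (P.root i))).comp e) (fun j hj => by
      by_cases h : j = i
      · simp [h, hei]
      · simpa [hej j hj h] using hgb j hj) hx
    simp only [AddMonoidHom.sub_apply, AddMonoidHom.comp_apply, AddMonoidHom.coe_mulLeft, hx0] at h2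
    nlinarith
  have hR0 : ∀ j, g (P.root j) = 0 → e (P.root j) = 0 := by
    intro j hj
    rcases b.root_mem_or_neg_mem j with h | h
    · exact hF _ h hj
    · have := hF _ h (by rw [map_neg, hj, neg_zero])
      rwa [map_neg, neg_eq_zero] at this
  have hR1 : ∀ j, g (P.root j) = 1 → e (P.root j) = c i := by
    intro j hj
    have h1 := rp_nonneg b g hgb (hhigh j)
    rw [map_sub, hj] at h1
    have h2 := hg1 θ
    have := hF _ (hhigh j) (by rw [map_sub, hj]; linarith)
    rw [map_sub, heθ] at this
    linarith
  have hSe : ∀ s ∈ S, e s = c i * g s := by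
    intro s hs
    obtain ⟨z, hz⟩ := hgS s hs
    obtain ⟨j, rfl⟩ := hSr hs
    obtain ⟨j', hj'⟩ := hgneg j
    have h1 := hg1 j
    have h2 := hg1 j'
    rw [hj', map_neg, hz] at h2
    rw [hz] at h1
    have h1' : z ≤ 1 := by exact_mod_cast h1
    have h2' : -z ≤ 1 := by exact_mod_cast h2
    obtain rfl | rfl | rfl : z = -1 ∨ z = 0 ∨ z = 1 := by omega
    · have := hR1 j' (by rw [hj', map_neg, hz]; simp)
      rw [hj', map_neg] at this
      rw [hz]; push_cast; linarith
    · rw [hR0 j (by simpa using hz), hz]; simp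
    · rw [hR1 j (by simpa using hz), hz]; simp
  have hcl : e (n • y) = c i * g (n • y) := by
    have : AddSubgroup.closure S ≤ (e - (AddMonoidHom.mulLeft (c i : ℚ)).comp g).ker := by
      rw [AddSubgroup.closure_le]
      intro s hs
      have := hSe s hs
      simp [AddMonoidHom.mem_ker, this]
    have := this hny
    rw [AddMonoidHom.mem_ker, AddMonoidHom.sub_apply, sub_eq_zero] at this
    exact this
  have hey : (c i : ℚ) * g y = e y := by
    rw [map_nsmul, map_nsmul, nsmul_eq_mul, nsmul_eq_mul] at hcl
    have hn0 : (n : ℚ) ≠ 0 := by positivity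
    apply mul_left_cancel₀ hn0
    linarith
  have heint : ∃ z : ℤ, e y = z := by
    have hcl1 : AddSubgroup.closure (Set.range P.root) ≤
        (Int.castAddHom ℚ).range.comap e := by
      have hb : ∀ x ∈ AddSubmonoid.closure (P.root '' b.support),
          x ∈ (Int.castAddHom ℚ).range.comap e := by
        intro x hx
        have hle : AddSubmonoid.closure (P.root '' b.support) ≤
            ((Int.castAddHom ℚ).range.comap e).toAddSubmonoid := by
          rw [AddSubmonoid.closure_le]
          rintro _ ⟨j, hj, rfl⟩
          by_cases h : j = i
          · exact ⟨1, by simp [h, hei]⟩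
          · exact ⟨0, by simp [hej j hj h]⟩
        exact hle hx
      rw [AddSubgroup.closure_le]
      rintro _ ⟨j, rfl⟩
      rcases b.root_mem_or_neg_mem j with h | h
      · exact hb _ h
      · exact neg_mem_iff.1 (hb _ h)
    obtain ⟨z, hz⟩ := hcl1 hy
    exact ⟨z, hz.symm⟩
  obtain ⟨z, hz⟩ := heint
  have hdvd := hord' (c i) ⟨z, by rw [← hz, ← hey]; simp⟩
  have hdvd' : n ∣ c i := by exact_mod_cast hdvd
  exact (Nat.le_of_dvd (by omega) hdvd').trans h6
end MainPart
section LiftPart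
open RootPairing
set_option linter.unusedSectionVars false

lemma exists_char_inv {A : Type*} [AddCommGroup A] (a : A) (ha : addOrderOf a ≠ 0) :
    ∃ c : A →+ AddCircle (1 : ℚ), c a = (((addOrderOf a : ℚ)⁻¹ : ℚ) : AddCircle (1 : ℚ)) := by
  have h : CharacterModule.ofSpanSingleton a ⟨a, Submodule.mem_span_singleton_self a⟩ =
      (((addOrderOf a : ℚ)⁻¹ : ℚ) : AddCircle (1 : ℚ)) := by
    erw [CharacterModule.ofSpanSingleton, LinearMap.toAddMonoidHom_coe, LinearMap.comp_apply,
      CharacterModule.intSpanEquivQuotAddOrderOf_apply_self, Submodule.liftQSpanSingleton_apply,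
      AddMonoidHom.coe_toIntLinearMap, CharacterModule.int.divByNat,
      LinearMap.toSpanSingleton_apply_one]
    rw [if_neg ha]
  obtain ⟨c, hc⟩ := CharacterModule.dual_surjective_of_injective _
    (Submodule.injective_subtype _) (CharacterModule.ofSpanSingleton a)
  refine ⟨c, ?_⟩
  rw [← h, ← hc]; rfl

variable {ι K M N : Type*} [Fintype ι] [Field K] [CharZero K] [AddCommGroup M] [Module K M]
  [AddCommGroup N] [Module K N] (P : RootPairing ι K M N) [P.IsCrystallographic]
  [P.IsReduced] [P.IsIrreducible] [P.IsRootSystem]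

lemma rp_lift (ψ : AddSubgroup.closure (Set.range P.root) →+ AddCircle (1 : ℚ)) :
    ∃ g : M →+ ℚ, ∀ y : AddSubgroup.closure (Set.range P.root),
      ((g y : ℚ) : AddCircle (1 : ℚ)) = ψ y := by
  classical
  obtain ⟨b⟩ := P.nonempty_base
  have hmem : ∀ i, P.root i ∈ AddSubgroup.closure (Set.range P.root) :=
    fun i => AddSubgroup.subset_closure ⟨i, rfl⟩
  have hq : ∀ i, ∃ q : ℚ, (q : AddCircle (1 : ℚ)) = ψ ⟨P.root i, hmem i⟩ := fun i =>
    QuotientAddGroup.mk_surjective _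
  choose q hq using hq
  have he : ∀ i : b.support, ∃ e : M →+ ℚ, e (P.root i) = 1 ∧
    ∀ j ∈ b.support, j ≠ i → e (P.root j) = 0 := fun i => rp_coord b i.2
  choose e he1 he0 using he
  let g : M →+ ℚ := ∑ i : b.support, (AddMonoidHom.mulLeft (q i)).comp (e i)
  have hg : ∀ j : b.support, g (P.root j) = q j := by
    intro j
    simp only [g, AddMonoidHom.finsetSum_apply]
    rw [Finset.sum_eq_single j]
    · simp [he1]
    · intro i _ hij
      simp [he0 i j j.2 (fun h => hij (Subtype.ext h.symm))]
    · simp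
  have hle : AddSubgroup.closure (Set.range P.root) ≤
      AddSubgroup.map (AddSubgroup.subtype _)
        ((((QuotientAddGroup.mk' _ : ℚ →+ AddCircle (1 : ℚ)).comp g).comp
          (AddSubgroup.subtype _) - ψ).ker) := by
    have hb : AddSubmonoid.closure (P.root '' b.support) ≤
      (AddSubgroup.map (AddSubgroup.subtype _)
        ((((QuotientAddGroup.mk' _ : ℚ →+ AddCircle (1 : ℚ)).comp g).comp
          (AddSubgroup.subtype _) - ψ).ker)).toAddSubmonoid := by
      rw [AddSubmonoid.closure_le]
      rintro _ ⟨j, hj, rfl⟩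
      refine ⟨⟨P.root j, hmem j⟩, ?_, rfl⟩
      have h1 := hg ⟨j, hj⟩
      have h2 := hq j
      simp only [] at h1
      rw [← h1] at h2
      change _ - _ = (0 : AddCircle (1 : ℚ))
      rw [sub_eq_zero]
      exact h2
    rw [AddSubgroup.closure_le]
    rintro _ ⟨j, rfl⟩
    rcases b.root_mem_or_neg_mem j with h | h
    · exact hb h
    · exact neg_mem_iff.1 (hb h)
  refine ⟨g, fun y => ?_⟩
  obtain ⟨y', hy', hyy⟩ := hle y.2
  obtain rfl : y' = y := Subtype.ext hyy
  exact sub_eq_zero.1 hy'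

lemma rp_final {S : Set M} (hSr : S ⊆ Set.range P.root)
    (x : AddSubgroup.closure (Set.range P.root) ⧸
      (AddSubgroup.closure S).addSubgroupOf (AddSubgroup.closure (Set.range P.root))) :
    addOrderOf x ≤ 6 := by
  by_contra! hn
  obtain ⟨c, hc⟩ := exists_char_inv x (by omega)
  obtain ⟨y, rfl⟩ := QuotientAddGroup.mk_surjective x
  obtain ⟨g, hg⟩ := rp_lift P (c.comp (QuotientAddGroup.mk' _))
  set n := addOrderOf (y : AddSubgroup.closure (Set.range P.root) ⧸
      (AddSubgroup.closure S).addSubgroupOf (AddSubgroup.closure (Set.range P.root))) with hndef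
  have hn0 : (n : ℚ) ≠ 0 := by
    have : n ≠ 0 := by omega
    exact_mod_cast this
  have hny : n • (y : M) ∈ AddSubgroup.closure S := by
    have h := addOrderOf_nsmul_eq_zero (y : AddSubgroup.closure (Set.range P.root) ⧸
      (AddSubgroup.closure S).addSubgroupOf (AddSubgroup.closure (Set.range P.root)))
    rw [← hndef, ← QuotientAddGroup.mk_nsmul, QuotientAddGroup.eq_zero_iff,
      AddSubgroup.mem_addSubgroupOf] at h
    exact h
  have := rp_main (P := P) hSr g (fun s hs => by
    have hs' : s ∈ AddSubgroup.closure (Set.range P.root) := AddSubgroup.subset_closure (hSr hs)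
    have h1 := hg ⟨s, hs'⟩
    have h2 : (QuotientAddGroup.mk' ((AddSubgroup.closure S).addSubgroupOf
        (AddSubgroup.closure (Set.range P.root)))) ⟨s, hs'⟩ = 0 := by
      rw [QuotientAddGroup.mk'_apply, QuotientAddGroup.eq_zero_iff, AddSubgroup.mem_addSubgroupOf]
      exact AddSubgroup.subset_closure hs
    rw [AddMonoidHom.comp_apply, h2, map_zero, AddCircle.coe_eq_zero_iff] at h1
    obtain ⟨z, hz⟩ := h1
    exact ⟨z, by rw [← hz]; simp⟩) y.2 (n := n) (by omega) hny (by
    rintro m ⟨z, hz⟩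
    have h1 := hg y
    rw [AddMonoidHom.comp_apply, QuotientAddGroup.mk'_apply, hc, ← sub_eq_zero, ← AddCircle.coe_sub,
      AddCircle.coe_eq_zero_iff] at h1
    obtain ⟨w, hw⟩ := h1
    have hw' : g y = w + (n : ℚ)⁻¹ := by
      rw [zsmul_one] at hw
      linarith
    rw [hw'] at hz
    refine ⟨z - m * w, ?_⟩
    have : (m : ℚ) = n * (z - m * w) := by
      rw [← hz]; field_simp; ring
    exact_mod_cast this)
  omega
end LiftPart

/-- If `𝔤` is simple, every element of `Tor(Γ_𝔨)` has order at most `6`. -/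
theorem torsion_order_le_six
    (L : Type*) [LieRing L] [LieAlgebra ℂ L] [FiniteDimensional ℂ L]
    [LieAlgebra.IsSimple ℂ L]
    (H : LieSubalgebra ℂ L) [H.IsCartanSubalgebra]
    (P : Set (Module.Dual ℂ H))
    (hP : IsClosedSymmetricSubsystem (lieRoots L H) P) :
    ∀ x ∈ AddCommGroup.torsion (GammaK L H P), addOrderOf x ≤ 6 := by
  intro x _
  have hK : LieAlgebra.IsKilling ℂ L := inferInstance
  have hΩ : lieRoots L H = Set.range (LieAlgebra.IsKilling.rootSystem H).root := by
    ext α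
    constructor
    · rintro ⟨h0, h1⟩
      let w : LieModule.Weight ℂ H L := ⟨α, h1⟩
      have hw : w ∈ H.root := by
        simp only [LieSubalgebra.root, Finset.mem_filter, Finset.mem_univ, true_and]
        intro hz
        apply h0
        ext h
        exact congrFun hz h
      refine ⟨⟨w, hw⟩, ?_⟩
      ext h
      rfl
    · rintro ⟨⟨w, hw⟩, rfl⟩
      simp only [LieSubalgebra.root, Finset.mem_filter, Finset.mem_univ, true_and] at hw
      refine ⟨fun hz => hw ?_, w.genWeightSpace_ne_bot⟩
      funext h
      exact LinearMap.congr_fun hz h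
  have hsub : P ⊆ lieRoots L H := hP.1
  clear hP
  revert x hsub
  unfold GammaK
  rw [hΩ]
  intro x _ hsub
  exact rp_final (LieAlgebra.IsKilling.rootSystem H) hsub x
end

section
/- Suppose 𝔤 is a classical simple complex Lie algebra, i.e. 𝔤 = sl(n,ℂ) with n ≥ 2, 𝔤 = so(n,ℂ) with n ≥ 5, or 𝔤 = sp(2n,ℂ) with n ≥ 1. Then Tor(Γ_𝔨) is an elementary abelian 2-group, i.e. every element x of Tor(Γ_𝔨) satisfies x + x = 0 (so Tor(Γ_𝔨) is isomorphic to a direct sum of copies of ℤ/2ℤ). -/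
open LieAlgebra

lemma aux_sum_class {ι A : Type*} [Fintype ι] [AddCommGroup A] (a : ι → A) (d : ι → ℤ)
    (h : ∀ t : A, ∀ S : Finset ι, (∀ i, i ∈ S ↔ a i = t) → ∑ i ∈ S, d i = 0) :
    ∑ i, d i • a i = 0 := by
  classical
  rw [← Finset.sum_fiberwise_of_maps_to (s := Finset.univ) (t := Finset.univ.image a) (g := a)
    (fun i _ => Finset.mem_image_of_mem _ (Finset.mem_univ i))]
  refine Finset.sum_eq_zero fun t _ => ?_
  have : ∀ i ∈ Finset.univ.filter (fun i => a i = t), d i • a i = d i • t := by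
    intro i hi
    rw [(Finset.mem_filter.1 hi).2]
  rw [Finset.sum_congr rfl this, ← Finset.sum_smul, h t _ (by simp), zero_smul]

lemma aux_expand {ι D : Type*} [Fintype ι] [AddCommGroup D] (w : ι → D) (Ω : Set D)
    (hΩ : ∀ α ∈ Ω, ∃ i j, α = w i - w j) (x : D) (hx : x ∈ AddSubgroup.closure Ω) :
    ∃ c : ι → ℤ, ∑ i, c i = 0 ∧ x = ∑ i, c i • w i := by
  classical
  induction hx using AddSubgroup.closure_induction with
  | mem x hx =>
    obtain ⟨i, j, rfl⟩ := hΩ x hx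
    exact ⟨Pi.single i 1 - Pi.single j 1, by simp, by simp [sub_smul, Pi.single_apply]⟩
  | zero => exact ⟨0, by simp, by simp⟩
  | add x y _ _ hx hy =>
    obtain ⟨c, hc, rfl⟩ := hx
    obtain ⟨d, hd, rfl⟩ := hy
    exact ⟨c + d, by simp [Finset.sum_add_distrib, hc, hd],
      by simp [add_smul, Finset.sum_add_distrib]⟩
  | neg x _ hx =>
    obtain ⟨c, hc, rfl⟩ := hx
    exact ⟨-c, by simp [hc], by simp⟩

lemma aux_kill {D : Type*} [AddCommGroup D] (P : Set D) (F : D →+ ℂ) (hF : ∀ p ∈ P, F p = 0)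
    (x : D) (m : ℕ) (hm : 0 < m) (hx : m • x ∈ AddSubgroup.closure P) : F x = 0 := by
  have h1 : AddSubgroup.closure P ≤ F.ker := (AddSubgroup.closure_le _).2 fun p hp => hF p hp
  have h2 : F (m • x) = 0 := h1 hx
  rw [map_nsmul] at h2
  rcases smul_eq_zero.1 h2 with h | h
  · omega
  · exact h

lemma aux_comb_sl {ι D : Type*} [Fintype ι] [AddCommGroup D] (w : ι → D) (Ω P : Set D)
    (hΩ : ∀ α ∈ Ω, ∃ i j, α = w i - w j) (hP : P ⊆ Ω)
    (hF : ∀ c : ι → ℂ, ∃ F : D →+ ℂ, ∃ t : ℂ, ∀ i, F (w i) = c i - t)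
    (x : D) (hx : x ∈ AddSubgroup.closure Ω) (m : ℕ) (hm : 0 < m)
    (hmx : m • x ∈ AddSubgroup.closure P) : x + x ∈ AddSubgroup.closure P := by
  classical
  suffices x ∈ AddSubgroup.closure P from add_mem this this
  obtain ⟨c, hc, rfl⟩ := aux_expand w Ω hΩ x hx
  rw [← QuotientAddGroup.eq_zero_iff, QuotientAddGroup.mk_sum]
  have := aux_sum_class (fun i => (QuotientAddGroup.mk (w i) : D ⧸ AddSubgroup.closure P)) c ?_
  · exact this
  intro t S hS
  obtain ⟨F, s, hF⟩ := hF (fun i => if i ∈ S then 1 else 0)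
  have h0 := aux_kill P F (by
    intro p hp
    obtain ⟨i, j, rfl⟩ := hΩ p (hP hp)
    have hij : (QuotientAddGroup.mk (w i) : D ⧸ AddSubgroup.closure P) =
        QuotientAddGroup.mk (w j) := by
      rw [eq_comm, QuotientAddGroup.eq, neg_add_eq_sub]
      exact AddSubgroup.subset_closure hp
    rw [map_sub, hF, hF]
    have : i ∈ S ↔ j ∈ S := by rw [hS, hS, hij]
    simp [this]) _ m hm hmx
  rw [map_sum] at h0
  simp only [map_zsmul, hF, zsmul_eq_mul, mul_sub, Finset.sum_sub_distrib, ← Finset.sum_mul] at h0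
  rw [← Int.cast_sum, hc] at h0
  simp at h0
  exact_mod_cast h0

lemma aux_comb_form {ι D : Type*} [Fintype ι] [AddCommGroup D] (w : ι → D) (Ω P : Set D)
    (hΩ : ∀ α ∈ Ω, ∃ i j, α = w i - w j) (hP : P ⊆ Ω)
    (ng : ι → ι) (hng : ∀ i, ng (ng i) = i) (hw : ∀ i, w (ng i) = - w i)
    (hF : ∀ c : ι → ℂ, (∀ i, c (ng i) = - c i) → ∃ F : D →+ ℂ, ∀ i, F (w i) = c i)
    (x : D) (hx : x ∈ AddSubgroup.closure Ω) (m : ℕ) (hm : 0 < m)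
    (hmx : m • x ∈ AddSubgroup.closure P) : x + x ∈ AddSubgroup.closure P := by
  classical
  obtain ⟨c, hc, rfl⟩ := aux_expand w Ω hΩ x hx
  let e : ι ≃ ι := ⟨ng, ng, hng, hng⟩
  have h2 : ∑ i, c i • w i + ∑ i, c i • w i = ∑ i, (c i - c (ng i)) • w i := by
    have : ∑ i, c i • w i = ∑ i, c (ng i) • w (ng i) :=
      (Equiv.sum_comp e (fun i => c i • w i)).symm
    conv_lhs => rw [this]
    conv_lhs => enter [1]; rw [← this]
    rw [← Finset.sum_add_distrib]
    exact Finset.sum_congr rfl fun i _ => by rw [hw, sub_smul, smul_neg, sub_eq_add_neg]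
  rw [h2, ← QuotientAddGroup.eq_zero_iff, QuotientAddGroup.mk_sum]
  have := aux_sum_class (fun i => (QuotientAddGroup.mk (w i) : D ⧸ AddSubgroup.closure P))
    (fun i => c i - c (ng i)) ?_
  · exact this
  intro t S hS
  obtain ⟨F, hF⟩ := hF (fun i => (if i ∈ S then 1 else 0) - (if ng i ∈ S then 1 else 0)) (by
    intro i; simp [hng])
  have h0 := aux_kill P F (by
    intro p hp
    obtain ⟨i, j, rfl⟩ := hΩ p (hP hp)
    have hij : (QuotientAddGroup.mk (w i) : D ⧸ AddSubgroup.closure P) =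
        QuotientAddGroup.mk (w j) := by
      rw [eq_comm, QuotientAddGroup.eq, neg_add_eq_sub]
      exact AddSubgroup.subset_closure hp
    rw [map_sub, hF, hF]
    have h1 : i ∈ S ↔ j ∈ S := by rw [hS, hS, hij]
    have h3 : ng i ∈ S ↔ ng j ∈ S := by
      rw [hS, hS, hw, hw, QuotientAddGroup.mk_neg, QuotientAddGroup.mk_neg, hij]
    simp [h1, h3]) _ m hm hmx
  rw [map_sum] at h0
  simp only [map_zsmul, hF, zsmul_eq_mul, mul_sub, Finset.sum_sub_distrib] at h0
  have h4 : ∑ i, (c i : ℂ) * (if ng i ∈ S then 1 else 0)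
      = ∑ i, (c (ng i) : ℂ) * (if i ∈ S then 1 else 0) := by
    rw [← Equiv.sum_comp e]
    simp [e, hng]
  rw [h4] at h0
  rw [Finset.sum_sub_distrib]
  simp at h0
  exact_mod_cast h0

section
open LieModule
variable (L : Type*) [LieRing L] [LieAlgebra ℂ L] [FiniteDimensional ℂ L]
  (H : LieSubalgebra ℂ L) [H.IsCartanSubalgebra]
  (V : Type*) [AddCommGroup V] [Module ℂ V] [FiniteDimensional ℂ V]
  [LieRingModule L V] [LieModule ℂ L V]

lemma aux_ext {A : Type*} [AddCommGroup A] [Module ℂ A] (f g : V →ₗ[ℂ] A)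
    (h : ∀ μ : Weight ℂ H V, ∀ v ∈ genWeightSpace V μ, f v = g v) : f = g := by
  have htop : (⨆ μ : Weight ℂ H V, (genWeightSpace V μ).toSubmodule) = ⊤ := by
    rw [← LieSubmodule.iSup_toSubmodule, iSup_genWeightSpace_eq_top' ℂ H V]; rfl
  have : (⊤ : Submodule ℂ V) ≤ LinearMap.eqLocus f g := by
    rw [← htop]
    exact iSup_le fun μ v hv => h μ v hv
  ext v
  exact this (Submodule.mem_top (x := v))

lemma aux_exists_T (c : Weight ℂ H V → ℂ) :
    ∃ T : V →ₗ[ℂ] V, ∀ μ : Weight ℂ H V, ∀ v ∈ genWeightSpace V μ, T v = c μ • v := by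
  classical
  have htop : (⨆ μ : Weight ℂ H V, (genWeightSpace V μ).toSubmodule) = ⊤ := by
    rw [← LieSubmodule.iSup_toSubmodule, iSup_genWeightSpace_eq_top' ℂ H V]; rfl
  have hind : iSupIndep fun μ : Weight ℂ H V => (genWeightSpace V μ).toSubmodule :=
    LieSubmodule.iSupIndep_toSubmodule.2 (iSupIndep_genWeightSpace' ℂ H V)
  have hint : DirectSum.IsInternal fun μ : Weight ℂ H V => (genWeightSpace V μ).toSubmodule :=
    (DirectSum.isInternal_submodule_iff_iSupIndep_and_iSup_eq_top _).2 ⟨hind, htop⟩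
  let e := LinearEquiv.ofBijective
    (DirectSum.coeLinearMap fun μ : Weight ℂ H V => (genWeightSpace V μ).toSubmodule) hint
  let f : (DirectSum (Weight ℂ H V) fun μ => (genWeightSpace V μ).toSubmodule) →ₗ[ℂ] V :=
    DirectSum.toModule ℂ _ V fun μ => c μ • (genWeightSpace V μ).toSubmodule.subtype
  refine ⟨f ∘ₗ e.symm.toLinearMap, fun μ v hv => ?_⟩
  have : e (DirectSum.lof ℂ _ (fun μ : Weight ℂ H V => (genWeightSpace V μ).toSubmodule) μ ⟨v, hv⟩)
      = v := by
    simp only [e]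
    exact DirectSum.coeLinearMap_lof _ _ _
  have h2 : e.symm v = DirectSum.lof ℂ _ _ μ ⟨v, hv⟩ := by
    rw [LinearEquiv.symm_apply_eq, this]
  simp only [LinearMap.comp_apply, LinearEquiv.coe_coe, h2, f, DirectSum.toModule_lof]
  rfl

lemma aux_eval (hfaith : ∀ x : L, (∀ v : V, ⁅x, v⁆ = 0) → x = 0)
    (c : Weight ℂ H V → ℂ) (y : L)
    (hy : ∀ μ : Weight ℂ H V, ∀ v ∈ genWeightSpace V μ, ⁅y, v⁆ = c μ • v) :
    ∃ h : H, ∀ μ : Weight ℂ H V, μ h = c μ := by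
  have hcomm : ∀ x : H, ⁅y, (x : L)⁆ = 0 := by
    intro x
    apply hfaith
    have := aux_ext L H V (toEnd ℂ L V ⁅y, (x : L)⁆) 0 (by
      intro μ v hv
      have hxv : ⁅(x : L), v⁆ ∈ genWeightSpace V μ := (genWeightSpace V μ).lie_mem (x := x) hv
      simp only [toEnd_apply_apply, LinearMap.zero_apply, lie_lie, hy μ v hv, hy μ _ hxv, lie_smul,
        sub_self])
    intro v
    exact LinearMap.congr_fun this v
  have hyH : y ∈ H := by
    rw [← LieSubalgebra.IsCartanSubalgebra.self_normalizing (H := H),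
      LieSubalgebra.mem_normalizer_iff]
    intro x hx
    rw [hcomm ⟨x, hx⟩]
    exact H.zero_mem
  refine ⟨⟨y, hyH⟩, fun μ => ?_⟩
  obtain ⟨v, hv, hv0⟩ := μ.exists_ne_zero
  by_contra hne
  have hd := disjoint_genWeightSpaceOf ℂ H V (x := ⟨y, hyH⟩) hne
  have h1 : v ∈ genWeightSpaceOf V (μ ⟨y, hyH⟩) (⟨y, hyH⟩ : H) :=
    genWeightSpace_le_genWeightSpaceOf V _ _ hv
  have h2 : v ∈ genWeightSpaceOf V (c μ) (⟨y, hyH⟩ : H) := by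
    rw [mem_genWeightSpaceOf]
    refine ⟨1, ?_⟩
    have := hy μ v hv
    simpa [sub_eq_zero] using this
  apply hv0
  have := (LieSubmodule.disjoint_toSubmodule.2 hd)
  exact (Submodule.disjoint_def.1 this) v h1 h2

lemma aux_roots (hfaith : ∀ x : L, (∀ v : V, ⁅x, v⁆ = 0) → x = 0) :
    ∀ α ∈ lieRoots L H, ∃ μ ν : Weight ℂ H V, α = Weight.toLinear ℂ H V μ - Weight.toLinear ℂ H V ν := by
  rintro α ⟨_, hα⟩
  obtain ⟨x, hx, hx0⟩ := (by
    by_contra hh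
    push Not at hh
    exact hα ((LieSubmodule.eq_bot_iff _).2 hh) : ∃ x ∈ rootSpace H α, x ≠ 0)
  by_contra hcon
  push Not at hcon
  apply hx0
  apply hfaith
  have := aux_ext L H V (toEnd ℂ L V x) 0 (by
    intro ν v hv
    by_contra hne
    have hmem := lie_mem_genWeightSpace_of_mem_genWeightSpace hx hv
    let μ : Weight ℂ H V := ⟨α + ν, fun hbot => hne (by rw [hbot] at hmem; exact hmem)⟩
    apply hcon μ ν
    ext h
    simp [μ, Weight.toLinear])
  intro v
  exact LinearMap.congr_fun this v

lemma aux_orth (B : V →ₗ[ℂ] V →ₗ[ℂ] ℂ) (hB : ∀ (x : L) v w, B ⁅x, v⁆ w = - B v ⁅x, w⁆)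
    (μ ν : Weight ℂ H V) (x : H) (hx : μ x + ν x ≠ 0) (v w : V)
    (hv : v ∈ genWeightSpace V μ) (hw : w ∈ genWeightSpace V ν) : B v w = 0 := by
  obtain ⟨k, hk⟩ := (mem_genWeightSpace V μ v).1 hv x
  let g : Module.End ℂ V := toEnd ℂ H V x + μ x • 1
  have hpow : ∀ (k : ℕ) (v w : V), B (((toEnd ℂ H V x - μ x • 1) ^ k) v) w
      = (-1) ^ k * B v ((g ^ k) w) := by
    intro k
    induction k with
    | zero => simp
    | succ k ih =>
      intro v w
      rw [pow_succ, Module.End.mul_apply, ih, pow_succ' g, Module.End.mul_apply]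
      have := hB x v ((g ^ k) w)
      have e1 : (toEnd ℂ H V x - μ x • (1 : Module.End ℂ V)) v = ⁅(x : L), v⁆ - μ x • v := rfl
      have e2 : g ((g ^ k) w) = ⁅(x : L), (g ^ k) w⁆ + μ x • (g ^ k) w := rfl
      rw [e1, e2, map_sub, LinearMap.sub_apply, this, map_add, map_smul, map_smul,
        LinearMap.smul_apply]
      simp only [smul_eq_mul]
      ring
  have hmaps : ∀ u ∈ genWeightSpace V ν, g u ∈ genWeightSpace V ν := by
    intro u hu
    exact add_mem ((genWeightSpace V ν).lie_mem (x := x) hu)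
      ((genWeightSpace V ν).smul_mem (μ x) hu)
  let g' := g.restrict (p := (genWeightSpace V ν).toSubmodule) hmaps
  have hinj : Function.Injective g' := by
    rw [injective_iff_map_eq_zero]
    rintro ⟨u, hu⟩ h0
    have h0' : g u = 0 := congrArg Subtype.val h0
    have hne : ν x ≠ - μ x := fun h => hx (by rw [h]; ring)
    have hd := disjoint_genWeightSpaceOf ℂ H V (x := x) hne
    have h1 : u ∈ genWeightSpaceOf V (ν x) x := genWeightSpace_le_genWeightSpaceOf V _ _ hu
    have h2 : u ∈ genWeightSpaceOf V (- μ x) x := by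
      rw [mem_genWeightSpaceOf]
      refine ⟨1, ?_⟩
      simpa [g] using h0'
    exact Subtype.ext ((Submodule.disjoint_def.1 (LieSubmodule.disjoint_toSubmodule.2 hd)) u h1 h2)
  have hsurj : Function.Surjective g' := LinearMap.injective_iff_surjective.1 hinj
  have hsurjk : Function.Surjective (g' ^ k) := by
    rw [Module.End.coe_pow]
    exact hsurj.iterate k
  obtain ⟨u, hu⟩ := hsurjk ⟨w, hw⟩
  have hu' : (g ^ k) (u : V) = w := by
    have := congrArg Subtype.val hu
    rw [Module.End.pow_restrict] at this
    exact this
  have := hpow k v u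
  rw [hk, hu'] at this
  simpa using this.symm

lemma aux_final (P : Set (Module.Dual ℂ H))
    (h : ∀ x ∈ AddSubgroup.closure (lieRoots L H), ∀ m : ℕ, 0 < m →
      m • x ∈ AddSubgroup.closure P → x + x ∈ AddSubgroup.closure P) :
    ∀ x ∈ AddCommGroup.torsion (GammaK L H P), x + x = 0 := by
  intro x hx
  obtain ⟨⟨y, hy⟩, rfl⟩ := QuotientAddGroup.mk_surjective x
  obtain ⟨m, hm, hmx⟩ := isOfFinAddOrder_iff_nsmul_eq_zero.1 hx
  rw [← QuotientAddGroup.mk_nsmul, QuotientAddGroup.eq_zero_iff, AddSubgroup.mem_addSubgroupOf] at hmx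
  rw [← QuotientAddGroup.mk_add, QuotientAddGroup.eq_zero_iff, AddSubgroup.mem_addSubgroupOf]
  exact h y hy m hm hmx

lemma aux_main_sl (hfaith : ∀ x : L, (∀ v : V, ⁅x, v⁆ = 0) → x = 0) (hV : 0 < Module.finrank ℂ V)
    (hsl : ∀ T : V →ₗ[ℂ] V, LinearMap.trace ℂ V T = 0 → ∃ y : L, ∀ v, ⁅y, v⁆ = T v)
    (P : Set (Module.Dual ℂ H)) (hP : P ⊆ lieRoots L H) :
    ∀ x ∈ AddCommGroup.torsion (GammaK L H P), x + x = 0 := by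
  apply aux_final
  intro x hx m hm hmx
  refine aux_comb_sl (Weight.toLinear ℂ H V) _ P (aux_roots L H V hfaith) hP ?_ x hx m hm hmx
  intro c
  obtain ⟨T, hT⟩ := aux_exists_T L H V c
  let t : ℂ := LinearMap.trace ℂ V T / Module.finrank ℂ V
  obtain ⟨y, hy⟩ := hsl (T - t • LinearMap.id) (by
    have : (Module.finrank ℂ V : ℂ) ≠ 0 := by exact_mod_cast hV.ne'
    simp [t, LinearMap.trace_id, this])
  obtain ⟨h, hh⟩ := aux_eval L H V hfaith (fun μ => c μ - t) y (by
    intro μ v hv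
    rw [hy]
    simp [hT μ v hv, sub_smul])
  exact ⟨(LinearMap.applyₗ (R := ℂ) h).toAddMonoidHom, t, hh⟩

lemma aux_main_form (hfaith : ∀ x : L, (∀ v : V, ⁅x, v⁆ = 0) → x = 0)
    (B : V →ₗ[ℂ] V →ₗ[ℂ] ℂ) (hB : ∀ (x : L) v w, B ⁅x, v⁆ w = - B v ⁅x, w⁆)
    (hnd : ∀ v, (∀ w, B v w = 0) → v = 0)
    (hsk : ∀ T : V →ₗ[ℂ] V, (∀ v w, B (T v) w = - B v (T w)) → ∃ y : L, ∀ v, ⁅y, v⁆ = T v)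
    (P : Set (Module.Dual ℂ H)) (hP : P ⊆ lieRoots L H) :
    ∀ x ∈ AddCommGroup.torsion (GammaK L H P), x + x = 0 := by
  apply aux_final
  intro x hx m hm hmx
  have hex : ∀ μ : Weight ℂ H V, ∃ ν : Weight ℂ H V, ∀ h, ν h = - μ h := by
    intro μ
    by_contra hcon
    push Not at hcon
    obtain ⟨v, hv, hv0⟩ := μ.exists_ne_zero
    apply hv0
    apply hnd
    have := aux_ext L H V (B v) 0 (by
      intro ν w hw
      obtain ⟨h, hh⟩ := hcon ν
      exact aux_orth L H V B hB μ ν h (fun h0 => hh (by linear_combination h0)) v w hv hw)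
    intro w
    exact LinearMap.congr_fun this w
  choose ng hng using hex
  refine aux_comb_form (Weight.toLinear ℂ H V) _ P (aux_roots L H V hfaith) hP ng ?_ ?_ ?_ x hx m hm hmx
  · intro μ
    ext h
    rw [hng, hng, neg_neg]
  · intro μ
    ext h
    exact hng μ h
  intro c hc
  obtain ⟨T, hT⟩ := aux_exists_T L H V c
  obtain ⟨y, hy⟩ := hsk T (by
    have : B ∘ₗ T = - (LinearMap.lcomp ℂ ℂ T) ∘ₗ B := by
      refine aux_ext L H V _ _ fun μ v hv => aux_ext L H V _ _ fun ν w hw => ?_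
      simp only [LinearMap.comp_apply, LinearMap.neg_apply, LinearMap.lcomp_apply, hT μ v hv,
        hT ν w hw, map_smul, LinearMap.smul_apply, smul_eq_mul]
      by_cases h : ∀ h, μ h + ν h = 0
      · have : ν = ng μ := by
          ext z
          rw [hng]
          linear_combination h z
        rw [this, hc]
        ring
      · push Not at h
        obtain ⟨z, hz⟩ := h
        rw [aux_orth L H V B hB μ ν z hz v w hv hw]
        simp
    intro v w
    exact LinearMap.congr_fun (LinearMap.congr_fun this v) w)
  obtain ⟨h, hh⟩ := aux_eval L H V hfaith c y (by
    intro μ v hv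
    rw [hy, hT μ v hv])
  exact ⟨(LinearMap.applyₗ (R := ℂ) h).toAddMonoidHom, hh⟩

end

section
attribute [local instance 100] LieRing.ofAssociativeRing
open scoped Matrix

lemma aux_matrix_sl (L : Type*) [LieRing L] [LieAlgebra ℂ L] [FiniteDimensional ℂ L]
    (H : LieSubalgebra ℂ L) [H.IsCartanSubalgebra] (n : ℕ) (hn : 0 < n)
    (e : L ≃ₗ⁅ℂ⁆ ↥(LieAlgebra.SpecialLinear.sl (Fin n) ℂ))
    (P : Set (Module.Dual ℂ H)) (hP : P ⊆ lieRoots L H) :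
    ∀ x ∈ AddCommGroup.torsion (GammaK L H P), x + x = 0 := by
  let ρ : L →ₗ⁅ℂ⁆ Module.End ℂ (Fin n → ℂ) :=
    (lieEquivMatrix' (R := ℂ) (n := Fin n)).symm.toLieHom.comp
      ((LieAlgebra.SpecialLinear.sl (Fin n) ℂ).incl.comp e.toLieHom)
  let i1 : LieRingModule L (Fin n → ℂ) := LieRingModule.compLieHom (Fin n → ℂ) ρ
  have i2 : LieModule ℂ L (Fin n → ℂ) := LieModule.compLieHom (Fin n → ℂ) ρ
  have hact : ∀ (x : L) (v : Fin n → ℂ), ⁅x, v⁆ = (e x).1 *ᵥ v := by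
    intro x v
    rfl
  refine aux_main_sl L H (Fin n → ℂ) ?_ (by simpa using hn) ?_ P hP
  · intro x hx
    apply e.injective
    apply Subtype.ext
    simp only [hact] at hx
    change (e x).1 = (e 0).1
    rw [map_zero]
    exact Matrix.ext_of_mulVec_single fun i => by rw [hx]; exact (Matrix.zero_mulVec _).symm
  · intro T hT
    refine ⟨e.symm ⟨LinearMap.toMatrix' T, ?_⟩, fun v => ?_⟩
    · rw [LinearMap.trace_eq_matrix_trace ℂ (Pi.basisFun ℂ (Fin n)), LinearMap.toMatrix_eq_toMatrix'] at hT
      exact hT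
    · rw [hact]
      simp [LinearMap.toMatrix'_mulVec]

lemma aux_matrix_form (L : Type*) [LieRing L] [LieAlgebra ℂ L] [FiniteDimensional ℂ L]
    (H : LieSubalgebra ℂ L) [H.IsCartanSubalgebra] (n : Type) [Fintype n] [DecidableEq n]
    (J : Matrix n n ℂ) (hJ : IsUnit J)
    (e : L ≃ₗ⁅ℂ⁆ ↥(skewAdjointMatricesLieSubalgebra J))
    (P : Set (Module.Dual ℂ H)) (hP : P ⊆ lieRoots L H) :
    ∀ x ∈ AddCommGroup.torsion (GammaK L H P), x + x = 0 := by
  let ρ : L →ₗ⁅ℂ⁆ Module.End ℂ (n → ℂ) :=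
    (lieEquivMatrix' (R := ℂ) (n := n)).symm.toLieHom.comp
      ((skewAdjointMatricesLieSubalgebra J).incl.comp e.toLieHom)
  let i1 : LieRingModule L (n → ℂ) := LieRingModule.compLieHom (n → ℂ) ρ
  have i2 : LieModule ℂ L (n → ℂ) := LieModule.compLieHom (n → ℂ) ρ
  have hact : ∀ (x : L) (v : n → ℂ), ⁅x, v⁆ = (e x).1 *ᵥ v := by
    intro x v
    rfl
  have hval : ∀ v w : n → ℂ, Matrix.toLinearMap₂' ℂ J v w = v ⬝ᵥ (J *ᵥ w) :=
    fun v w => Matrix.toLinearMap₂'_apply' J v w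
  refine aux_main_form L H (n → ℂ) ?_ (Matrix.toLinearMap₂' ℂ J) ?_ ?_ ?_ P hP
  · intro x hx
    apply e.injective
    apply Subtype.ext
    simp only [hact] at hx
    change (e x).1 = (e 0).1
    rw [map_zero]
    exact Matrix.ext_of_mulVec_single fun i => by rw [hx]; exact (Matrix.zero_mulVec _).symm
  · intro x v w
    have h : (e x).1ᵀ * J = J * (-(e x).1) := by
      have := (e x).2
      rw [mem_skewAdjointMatricesLieSubalgebra, mem_skewAdjointMatricesSubmodule] at this
      exact this
    rw [hact, hact, hval, hval, dotProduct_comm, Matrix.dotProduct_mulVec,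
      ← Matrix.mulVec_transpose, dotProduct_comm, Matrix.mulVec_mulVec, h]
    simp [Matrix.neg_mulVec]
  · intro v hv
    obtain ⟨u, rfl⟩ := hJ
    funext i
    have := hv ((↑u⁻¹ : Matrix n n ℂ) *ᵥ Pi.single i 1)
    rw [hval, Matrix.mulVec_mulVec, Units.mul_inv, Matrix.one_mulVec, dotProduct_single] at this
    simpa using this
  · intro T hT
    refine ⟨e.symm ⟨LinearMap.toMatrix' T, ?_⟩, fun v => ?_⟩
    · rw [mem_skewAdjointMatricesLieSubalgebra, mem_skewAdjointMatricesSubmodule]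
      change (LinearMap.toMatrix' T)ᵀ * J = J * (-(LinearMap.toMatrix' T))
      have hTv : ∀ v, T v = LinearMap.toMatrix' T *ᵥ v :=
        fun v => (LinearMap.toMatrix'_mulVec T v).symm
      refine Matrix.ext_of_mulVec_single fun j => ?_
      funext i
      have h := hT (Pi.single i 1) (Pi.single j 1)
      rw [hval, hval, hTv, hTv, dotProduct_comm, Matrix.dotProduct_mulVec,
        ← Matrix.mulVec_transpose, dotProduct_comm, Matrix.mulVec_mulVec,
        Matrix.mulVec_mulVec] at h
      rw [Matrix.mul_neg, Matrix.neg_mulVec]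
      simpa using h
    · rw [hact]
      simp [LinearMap.toMatrix'_mulVec]

end

/-- If `𝔤` is a classical simple Lie algebra (`sl(n,ℂ)`, `n ≥ 2`; `so(n,ℂ)`, `n ≥ 5`;
`sp(2n,ℂ)`, `n ≥ 1`), then `Tor(Γ_𝔨)` is an elementary abelian 2-group: every element `x`
satisfies `x + x = 0`. -/
theorem classical_torsion_two_torsion
    (L : Type*) [LieRing L] [LieAlgebra ℂ L] [FiniteDimensional ℂ L]
    [LieAlgebra.IsSimple ℂ L]
    (hclassical :
      (∃ n : ℕ, 2 ≤ n ∧ Nonempty (L ≃ₗ⁅ℂ⁆ ↥(LieAlgebra.SpecialLinear.sl (Fin n) ℂ))) ∨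
      (∃ n : ℕ, 5 ≤ n ∧ Nonempty (L ≃ₗ⁅ℂ⁆ ↥(LieAlgebra.Orthogonal.so (Fin n) ℂ))) ∨
      (∃ n : ℕ, 1 ≤ n ∧ Nonempty (L ≃ₗ⁅ℂ⁆ ↥(LieAlgebra.Symplectic.sp (Fin n) ℂ))))
    (H : LieSubalgebra ℂ L) [H.IsCartanSubalgebra]
    (P : Set (Module.Dual ℂ H))
    (hP : IsClosedSymmetricSubsystem (lieRoots L H) P) :
    ∀ x ∈ AddCommGroup.torsion (GammaK L H P), x + x = 0 := by
  rcases hclassical with ⟨n, hn, ⟨e⟩⟩ | ⟨n, hn, ⟨e⟩⟩ | ⟨n, hn, ⟨e⟩⟩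
  · exact aux_matrix_sl L H n (by omega) e P hP.1
  · exact aux_matrix_form L H (Fin n) 1 isUnit_one e P hP.1
  · exact aux_matrix_form L H (Fin n ⊕ Fin n) (Matrix.J (Fin n) ℂ)
      ((Matrix.isUnit_iff_isUnit_det _).2 (Matrix.isUnit_det_J (Fin n) ℂ)) e P hP.1
end

section
/- Assume 𝔤 is simple. If Γ_𝔨 is a finite non-cyclic group, then for every group homomorphism χ : Γ_𝔨 → ℂ∖{0} (into the multiplicative group of ℂ) there exists a root α ∈ Ω with ᾱ ≠ 0 and χ(ᾱ) = 1. -/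
open LieAlgebra

set_option linter.unusedSectionVars false

section RootLemmas
open Module

variable {ι R M N : Type*} [Finite ι] [Field R] [CharZero R] [AddCommGroup M] [Module R M]
  [AddCommGroup N] [Module R N] (P : RootPairing ι R M N) [P.IsCrystallographic]

lemma aux_retract (R : Type*) [Field R] [CharZero R] :
    ∃ ρ : R →+ ℚ, ∀ q : ℚ, ρ (q : R) = q := by
  obtain ⟨g, hg⟩ := LinearMap.exists_leftInverse_of_injective (Algebra.linearMap ℚ R)
    (LinearMap.ker_eq_bot.mpr (algebraMap ℚ R).injective)
  refine ⟨g.toAddMonoidHom, fun q => ?_⟩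
  have := LinearMap.congr_fun hg q
  simpa using this

lemma aux_sum (x : M →+ ℚ) [Fintype ι] (i : ι) :
    2 * ∑ k, (P.pairingIn ℤ k i : ℚ) * x (P.root k) =
      (∑ k, (P.pairingIn ℤ k i : ℚ) ^ 2) * x (P.root i) := by
  have h := Equiv.sum_comp (P.reflectionPerm i)
    (fun k => (P.pairingIn ℤ k i : ℚ) * x (P.root k))
  have h1 : ∀ k, (P.pairingIn ℤ (P.reflectionPerm i k) i : ℚ) * x (P.root (P.reflectionPerm i k))
      = - ((P.pairingIn ℤ k i : ℚ) * x (P.root k)) + (P.pairingIn ℤ k i : ℚ) ^ 2 * x (P.root i) := by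
    intro k
    rw [← P.pairingIn_reflectionPerm, P.pairingIn_reflectionPerm_self_right,
      P.root_reflectionPerm, P.reflection_apply_root' ℤ, map_sub, map_zsmul, zsmul_eq_mul]
    push_cast
    ring
  simp_rw [h1] at h
  rw [Finset.sum_add_distrib, Finset.sum_neg_distrib, ← Finset.sum_mul] at h
  linarith

lemma aux_min (x₀ : M →+ ℚ) (n : ℕ) (hn : 0 < n) (hx₀ : ∀ i, ∃ z : ℤ, n * x₀ (P.root i) = z) :
    ∃ x : M →+ ℚ, (∀ i, ∃ z : ℤ, x (P.root i) = x₀ (P.root i) + z) ∧ ∀ i, x (P.root i) ≤ 1 := by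
  classical
  have : Fintype ι := Fintype.ofFinite ι
  obtain ⟨ρ, hρ⟩ := aux_retract R
  let S : Set ℕ := {m | ∃ x : M →+ ℚ, (∀ i, ∃ z : ℤ, x (P.root i) = x₀ (P.root i) + z) ∧
    ∑ k, (n * x (P.root k)) ^ 2 = m}
  have key : ∀ x : M →+ ℚ, (∀ i, ∃ z : ℤ, x (P.root i) = x₀ (P.root i) + z) →
      ∃ m : ℕ, ∑ k, (n * x (P.root k)) ^ 2 = m := by
    intro x hx
    choose z hz using hx
    choose w hw using hx₀
    refine ⟨∑ k, (w k + n * z k).natAbs ^ 2, ?_⟩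
    push_cast
    refine Finset.sum_congr rfl fun k _ => ?_
    rw [hz, mul_add, hw, Nat.cast_natAbs, Int.cast_abs, sq_abs]
    push_cast; ring
  have hS : S.Nonempty := by
    obtain ⟨m, hm⟩ := key x₀ (fun i => ⟨0, by simp⟩)
    exact ⟨m, x₀, fun i => ⟨0, by simp⟩, hm⟩
  obtain ⟨x, hx, hxm⟩ := Nat.sInf_mem hS
  refine ⟨x, hx, fun i => ?_⟩
  let y : M →+ ℚ := x - ρ.comp (P.coroot' i).toAddMonoidHom
  have hy : ∀ k, y (P.root k) = x (P.root k) - P.pairingIn ℤ k i := by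
    intro k
    have h1 : P.coroot' i (P.root k) = ((P.pairingIn ℤ k i : ℚ) : R) := by
      rw [P.root_coroot'_eq_pairing, ← P.algebraMap_pairingIn ℤ]; simp
    simp only [y, AddMonoidHom.sub_apply, AddMonoidHom.comp_apply, LinearMap.toAddMonoidHom_coe]
    rw [h1, hρ]
  have hy' : ∀ k, ∃ z : ℤ, y (P.root k) = x₀ (P.root k) + z := by
    intro k
    obtain ⟨z, hz⟩ := hx k
    exact ⟨z - P.pairingIn ℤ k i, by rw [hy, hz]; push_cast; ring⟩
  obtain ⟨m, hm⟩ := key y hy'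
  have hle : sInf S ≤ m := Nat.sInf_le ⟨y, hy', hm⟩
  have hle' : ∑ k, (n * x (P.root k)) ^ 2 ≤ ∑ k, (n * y (P.root k)) ^ 2 := by
    rw [hm, hxm]; exact_mod_cast hle
  simp_rw [mul_pow, ← Finset.mul_sum] at hle'
  have hn' : (0 : ℚ) < (n : ℚ) ^ 2 := by positivity
  replace hle' := le_of_mul_le_mul_left hle' hn'
  have e : ∑ k, y (P.root k) ^ 2 = ∑ k, x (P.root k) ^ 2
      - 2 * ∑ k, (P.pairingIn ℤ k i : ℚ) * x (P.root k) + ∑ k, (P.pairingIn ℤ k i : ℚ) ^ 2 := by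
    rw [Finset.mul_sum, ← Finset.sum_sub_distrib, ← Finset.sum_add_distrib]
    refine Finset.sum_congr rfl fun k _ => ?_
    rw [hy]; ring
  rw [e, aux_sum] at hle'
  have hpos : 0 < ∑ k, (P.pairingIn ℤ k i : ℚ) ^ 2 := by
    refine Finset.sum_pos' (fun k _ => sq_nonneg _) ⟨i, Finset.mem_univ _, ?_⟩
    simp
  by_contra! hc
  nlinarith

lemma aux_base [P.IsRootSystem] [P.IsReduced] (x : M →+ ℚ) :
    ∃ b : P.Base, ∀ j ∈ b.support, 0 ≤ x (P.root j) := by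
  let _i : Module ℚ M := Module.compHom M (algebraMap ℚ R)
  obtain ⟨y, hy⟩ : ∃ f : Dual ℚ M, ∀ i, f (P.root i) ≠ 0 :=
    exists_dual_forall_apply_ne_zero P.root <| by simp [P.ne_zero]
  have : Fintype ι := Fintype.ofFinite ι
  let g : ι → ℚ := fun i => |y (P.root i)| / |x (P.root i)|
  let K : ℚ := ∑ i, g i + 1
  have hg0 : ∀ i, 0 ≤ g i := fun i => by positivity
  have hK : ∀ i, g i < K := fun i => by
    have := Finset.single_le_sum (f := g) (fun i _ => hg0 i) (Finset.mem_univ i)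
    simp only [K]; linarith
  have hK' : ∀ i, x (P.root i) ≠ 0 → |y (P.root i)| < K * |x (P.root i)| := fun i hi => by
    have := hK i
    rwa [div_lt_iff₀ (abs_pos.mpr hi)] at this
  have hK0 : 0 < K := by
    have := Finset.sum_nonneg (s := Finset.univ) (fun i _ => hg0 i)
    simp only [K]; linarith
  let f : M →+ ℚ := (AddMonoidHom.mulLeft K).comp x + (y : M →+ ℚ)
  have hf : ∀ v, f v = K * x v + y v := fun v => rfl
  have hf0 : ∀ i, f (P.root i) ≠ 0 := by
    intro i h
    rw [hf] at h
    by_cases hi : x (P.root i) = 0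
    · rw [hi] at h; exact hy i (by simpa using h)
    · have := hK' i hi
      rw [show y (P.root i) = -(K * x (P.root i)) by linarith, abs_neg, abs_mul,
        abs_of_pos hK0] at this
      exact lt_irrefl _ this
  have hfp : ∀ i, 0 < f (P.root i) → 0 ≤ x (P.root i) := by
    intro i h
    by_contra! hi
    have := hK' i hi.ne
    rw [abs_of_neg hi] at this
    rw [hf] at h
    have := le_abs_self (y (P.root i))
    linarith
  let := P.indexNeg
  refine ⟨RootPairing.Base.mk' P (IsAddIndecomposable.baseOf P.root f)
    (P.linearIndepOn_root_baseOf f hf0)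
    (fun i ↦ IsAddIndecomposable.mem_or_neg_mem_closure_baseOf P.root f i (hf0 i) (by simp)), ?_⟩
  intro j hj
  simp only [RootPairing.Base.mk', Set.Finite.mem_toFinset] at hj
  exact hfp j hj.1

end RootLemmas
section RootLemmas2
open Module

variable {ι R M N : Type*} [Finite ι] [Field R] [CharZero R] [AddCommGroup M] [Module R M]
  [AddCommGroup N] [Module R N] {P : RootPairing ι R M N} [P.IsCrystallographic] [P.IsReduced]
  [P.IsRootSystem] (b : P.Base)

/-- A positive root which stays no root when adding a positive root. -/
def AuxMax (m : ι) : Prop :=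
  b.IsPos m ∧ ∀ k, b.IsPos k → P.root m + P.root k ∉ Set.range P.root

lemma aux_pos_mem {i : ι} (hi : b.IsPos i) :
    P.root i ∈ AddSubmonoid.closure (P.root '' b.support) := by
  refine hi.induction_on_add (fun j hj => AddSubmonoid.subset_closure (Set.mem_image_of_mem _ hj)) ?_
  intro i j k h hi hj
  rw [h]
  exact add_mem hi (AddSubmonoid.subset_closure (Set.mem_image_of_mem _ hj))

lemma aux_exists_max {i : ι} (hi : b.IsPos i) :
    ∃ m, AuxMax b m ∧ P.root m - P.root i ∈ AddSubmonoid.closure (P.root '' b.support) := by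
  obtain ⟨m, ⟨hm, hm'⟩, hmax⟩ := Set.exists_max_image
    {m | b.IsPos m ∧ P.root m - P.root i ∈ AddSubmonoid.closure (P.root '' b.support)} b.height
    (Set.toFinite _) ⟨i, hi, by simp⟩
  refine ⟨m, ⟨hm, ?_⟩, hm'⟩
  rintro k hk ⟨l, hl⟩
  have := hmax l ⟨hm.add hk hl, by
    rw [hl, add_sub_right_comm]; exact add_mem hm' (aux_pos_mem b hk)⟩
  rw [b.height_add hl] at this
  rw [b.isPos_iff] at hk
  omega

variable {b}

lemma AuxMax.pairing_nonneg {m j : ι} (hm : AuxMax b m) (hj : j ∈ b.support) :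
    0 ≤ P.pairingIn ℤ m j := by
  by_contra! h
  have hjp := RootPairing.Base.isPos_of_mem_support hj
  refine hm.2 j hjp (P.root_add_root_mem_of_pairingIn_neg h fun h' => ?_)
  let := P.indexNeg
  have : m = -j := P.root.injective (by simpa using h')
  have h2 := hm.1
  rw [this, RootPairing.Base.IsPos.neg_iff_not] at h2
  exact h2 hjp

lemma aux_pairing_sum {m : ι} {f : ι → ℤ}
    (hf : P.root m = ∑ j ∈ b.support, f j • P.root j) (i : ι) :
    P.pairingIn ℤ m i = ∑ j ∈ b.support, f j * P.pairingIn ℤ j i :=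
  FaithfulSMul.algebraMap_injective ℤ R <| by
    rw [P.algebraMap_pairingIn, ← P.root_coroot'_eq_pairing, hf]
    simp [P.root_coroot'_eq_pairing, ← P.algebraMap_pairingIn ℤ]

lemma aux_coeff {m : ι} (hm : b.IsPos m) : ∃ f : ι → ℤ,
    P.root m = ∑ j ∈ b.support, f j • P.root j ∧ (∀ j, 0 ≤ f j) := by
  obtain ⟨f, hf₀, hf₁, hf₂⟩ := b.exists_root_eq_sum_int m
  refine ⟨f, hf₂, ?_⟩
  have : 0 < f := by
    refine hf₁.resolve_right ?_
    rw [b.isPos_iff, b.height_eq_sum hf₂] at hm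
    contrapose! hm
    exact Finset.sum_nonpos fun i _ ↦ hm.le i
  exact this.le

lemma AuxMax.full [P.IsIrreducible] {m : ι} (hm : AuxMax b m) {f : ι → ℤ}
    (hf : P.root m = ∑ j ∈ b.support, f j • P.root j) (hf0 : ∀ j, 0 ≤ f j) :
    ∀ j ∈ b.support, 0 < f j := by
  intro j₀ hj₀
  by_contra! hneg
  let T : Set ι := {t | t ∈ b.support ∧ f t ≠ 0}
  have horth : ∀ j ∈ b.support, j ∉ T → ∀ t ∈ T, P.IsOrthogonal j t := by
    intro j hj hjT t ht
    have h0 := hm.pairing_nonneg hj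
    rw [aux_pairing_sum hf] at h0
    have hfj : f j = 0 := by by_contra h; exact hjT ⟨hj, h⟩
    have hterm : ∀ k ∈ b.support, f k * P.pairingIn ℤ k j ≤ 0 := by
      intro k hk
      by_cases hkj : k = j
      · rw [hkj, hfj, zero_mul]
      · exact mul_nonpos_of_nonneg_of_nonpos (hf0 k) (b.pairingIn_le_zero_of_ne hkj hk hj)
    have h1 := (Finset.sum_eq_zero_iff_of_nonpos hterm).mp
      (le_antisymm (Finset.sum_nonpos hterm) h0) t ht.1
    have h2 : P.pairingIn ℤ t j = 0 := (mul_eq_zero.mp h1).resolve_left ht.2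
    have h3 : P.pairingIn ℤ j t = 0 := P.pairingIn_eq_zero_iff.mp h2
    exact ⟨by rw [← P.algebraMap_pairingIn ℤ, h3, map_zero],
      by rw [← P.algebraMap_pairingIn ℤ, h2, map_zero]⟩
  have hinv : ∀ j ∈ b.support,
      Submodule.span R (P.root '' T) ∈ Module.End.invtSubmodule (P.reflection j) := by
    intro j hj
    by_cases hjT : j ∈ T
    · exact Submodule.mem_invtSubmodule_reflection_of_mem _ _
        (Submodule.subset_span ⟨j, hjT, rfl⟩)
    · refine (Module.End.mem_invtSubmodule _).mpr fun x hx ↦ ?_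
      rwa [Submodule.mem_comap, LinearEquiv.coe_coe,
        (RootPairing.isFixedPt_reflection_of_isOrthogonal (horth _ hj hjT) hx).eq]
  have hmem : P.root m ∈ Submodule.span R (P.root '' T) := by
    rw [hf]
    refine sum_mem fun j hj => ?_
    by_cases h : f j = 0
    · simp [h]
    · exact zsmul_mem (Submodule.subset_span (Set.mem_image_of_mem _ (show j ∈ T from ⟨hj, h⟩))) _
  have htop : Submodule.span R (P.root '' T) = ⊤ :=
    RootPairing.IsIrreducible.eq_top_of_invtSubmodule_reflection (P := P) _
      ((RootPairing.Base.forall_mem_support_invtSubmodule_iff _).mp hinv) (by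
        intro h
        rw [h, Submodule.mem_bot] at hmem
        exact P.ne_zero m hmem)
  refine b.linearIndepOn_root.notMem_span (i := j₀) hj₀ ?_
  have : T ⊆ (b.support : Set ι) \ {j₀} := by
    rintro t ⟨ht, ht'⟩
    refine ⟨ht, ?_⟩
    rintro rfl
    exact ht' (le_antisymm hneg (hf0 _))
  exact Submodule.span_mono (Set.image_mono this) (htop ▸ Submodule.mem_top)

lemma AuxMax.unique [P.IsIrreducible] {m n : ι} (hm : AuxMax b m) (hn : AuxMax b n) : m = n := by
  obtain ⟨f, hf, hf0⟩ := aux_coeff hm.1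
  have hpos : 0 < P.pairingIn ℤ m n := by
    rw [aux_pairing_sum hf]
    have hnn : ∀ j ∈ b.support, 0 ≤ P.pairingIn ℤ j n := by
      intro j hj
      by_contra! h
      have := (P.pairingIn_lt_zero_iff ℤ).mp h
      exact absurd (hn.pairing_nonneg hj) (not_le.mpr this)
    obtain ⟨j, hj, hjn⟩ := hn.1.exists_mem_support_pos_pairingIn
    exact Finset.sum_pos' (fun k hk => mul_nonneg (hf0 k) (hnn k hk))
      ⟨j, hj, mul_pos (hm.full hf hf0 j hj) hjn⟩
  by_contra hne
  obtain ⟨k, hk⟩ := P.root_sub_root_mem_of_pairingIn_pos hpos hne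
  let := P.indexNeg
  rcases RootPairing.Base.IsPos.or_neg b k with h | h
  · exact hn.2 k h ⟨m, by rw [hk]; abel⟩
  · exact hm.2 (-k) h ⟨n, by rw [show P.root (-k) = -P.root k by simp, hk]; abel⟩

lemma aux_highest [P.IsIrreducible] (b : P.Base) : ∃ θ, ∀ i,
    P.root θ - P.root i ∈ AddSubmonoid.closure (P.root '' b.support) := by
  have : Nonempty ι := by
    by_contra h
    rw [not_nonempty_iff] at h
    have h1 := RootPairing.IsRootSystem.span_root_eq_top (P := P)
    have := RootPairing.IsIrreducible.nontrivial P
    simp [Set.range_eq_empty] at h1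
  obtain ⟨j, hj⟩ := b.support_nonempty
  obtain ⟨θ, hθ, -⟩ := aux_exists_max b (RootPairing.Base.isPos_of_mem_support hj)
  refine ⟨θ, fun i => ?_⟩
  let := P.indexNeg
  rcases RootPairing.Base.IsPos.or_neg b i with h | h
  · obtain ⟨m, hm, hmi⟩ := aux_exists_max b h
    rwa [hm.unique hθ] at hmi
  · have := add_mem (aux_pos_mem b hθ.1) (aux_pos_mem b h)
    simpa [sub_eq_add_neg] using this

lemma aux_coord (x : M →+ ℚ) (hx : ∀ j ∈ b.support, 0 ≤ x (P.root j)) (j : b.support)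
    {v : M} (hv : v ∈ AddSubmonoid.closure (P.root '' b.support)) :
    ∃ n : ℕ, b.toWeightBasis.coord j v = n ∧ n * x (P.root j) ≤ x v := by
  classical
  induction hv using AddSubmonoid.closure_induction with
  | mem v hv =>
    obtain ⟨k, hk, rfl⟩ := hv
    have h := b.toWeightBasis_apply ⟨k, hk⟩
    simp only at h
    by_cases hkj : (⟨k, hk⟩ : b.support) = j
    · refine ⟨1, ?_, ?_⟩
      · rw [← h, hkj]; simp
      · rw [← hkj]; simp
    · refine ⟨0, ?_, ?_⟩
      · rw [← h, Module.Basis.coord_apply, Module.Basis.repr_self, Finsupp.single_apply, if_neg hkj, Nat.cast_zero]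
      · simpa using hx k hk
  | zero => exact ⟨0, by simp⟩
  | add v w _ _ h1 h2 =>
    obtain ⟨n, hn, hn'⟩ := h1
    obtain ⟨m, hm, hm'⟩ := h2
    refine ⟨n + m, by rw [map_add, hn, hm]; push_cast; ring, ?_⟩
    rw [map_add]; push_cast; linarith

lemma aux_cyclic [P.IsIrreducible] (x : M →+ ℚ) (hle : ∀ i, x (P.root i) ≤ 1) (Z : AddSubgroup M)
    (hZ1 : ∀ i, (∃ z : ℤ, x (P.root i) = z) → P.root i ∈ Z)
    (hZ2 : Z ≤ AddSubgroup.closure {v | ∃ i, P.root i = v ∧ ∃ z : ℤ, x v = z})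
    (hfin : ∀ i, ∃ n : ℕ, 0 < n ∧ n • P.root i ∈ Z) :
    ∃ v ∈ AddSubgroup.closure (Set.range P.root), ∀ i, ∃ k : ℤ, P.root i - k • v ∈ Z := by
  classical
  obtain ⟨b, hb⟩ := aux_base P x
  obtain ⟨θ, hθ⟩ := aux_highest b
  have huniq : ∀ j j' : b.support, 0 < x (P.root j) → 0 < x (P.root j') → j = j' := by
    intro j j' hj hj'
    by_contra hne
    let c := b.toWeightBasis.coord
    let g : M →ₗ[R] R := c j' (P.root θ) • c j - c j (P.root θ) • c j'
    have hg : ∀ v, g v = c j' (P.root θ) * c j v - c j (P.root θ) * c j' v := fun v => rfl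
    have hcz : ∀ l : b.support, 0 < x (P.root l) →
        ∀ v ∈ AddSubmonoid.closure (P.root '' b.support), x v = 0 → c l v = 0 := by
      intro l hl v hv hxv
      obtain ⟨n, hn, hn'⟩ := aux_coord x hb l hv
      rw [hxv] at hn'
      have : (n : ℚ) = 0 := by
        have h0 : (0 : ℚ) ≤ n := by positivity
        by_contra h
        have : (0 : ℚ) < n := lt_of_le_of_ne h0 (Ne.symm h)
        have := mul_pos this hl
        linarith
      have : n = 0 := by exact_mod_cast this
      rw [this, Nat.cast_zero] at hn
      exact hn
    have hgpos : ∀ i, b.IsPos i → (∃ z : ℤ, x (P.root i) = z) → g (P.root i) = 0 := by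
      rintro i hi ⟨z, hz⟩
      have hmem := aux_pos_mem b hi
      have h0 : 0 ≤ x (P.root i) := by
        obtain ⟨n, -, hn⟩ := aux_coord x hb j hmem
        exact le_trans (mul_nonneg (by positivity) hj.le) hn
      have h1 := hle i
      rw [hz] at h0 h1
      have h0' : 0 ≤ z := by exact_mod_cast h0
      have h1' : z ≤ 1 := by exact_mod_cast h1
      have hz01 : z = 0 ∨ z = 1 := by omega
      rw [hg]
      rcases hz01 with rfl | rfl
      · rw [hcz j hj _ hmem (by simpa using hz), hcz j' hj' _ hmem (by simpa using hz)]
        simp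
      · have hd := hθ i
        have hd0 : x (P.root θ - P.root i) = 0 := by
          obtain ⟨n, -, hn⟩ := aux_coord x hb j hd
          have h2 : 0 ≤ x (P.root θ - P.root i) :=
            le_trans (mul_nonneg (by positivity) hj.le) hn
          have := hle θ
          rw [map_sub, hz] at h2 ⊢
          push_cast at h2 ⊢
          linarith
        have e1 := hcz j hj _ hd hd0
        have e2 := hcz j' hj' _ hd hd0
        rw [map_sub, sub_eq_zero] at e1 e2
        rw [e1, e2]; ring
    have hgall : ∀ i, (∃ z : ℤ, x (P.root i) = z) → g (P.root i) = 0 := by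
      rintro i ⟨z, hz⟩
      let := P.indexNeg
      rcases RootPairing.Base.IsPos.or_neg b i with h | h
      · exact hgpos i h ⟨z, hz⟩
      · have := hgpos (-i) h ⟨-z, by simp [hz]⟩
        simpa using this
    have hgZ : ∀ v ∈ Z, g v = 0 := by
      intro v hv
      have h2 : AddSubgroup.closure {v | ∃ i, P.root i = v ∧ ∃ z : ℤ, x v = z} ≤
          g.toAddMonoidHom.ker := by
        rw [AddSubgroup.closure_le]
        rintro _ ⟨i, rfl, hi⟩
        exact hgall i hi
      exact h2 (hZ2 hv)
    obtain ⟨n, hn, hnZ⟩ := hfin j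
    have h3 := hgZ _ hnZ
    rw [map_nsmul, smul_eq_zero] at h3
    replace h3 := h3.resolve_left hn.ne'
    have hj1 : ∀ l l' : b.support, c l (P.root l') = if l' = l then 1 else 0 := by
      intro l l'
      rw [← b.toWeightBasis_apply l']
      simp [c, Finsupp.single_apply]
    rw [hg, hj1, hj1, if_pos rfl, if_neg hne] at h3
    obtain ⟨k, hk, -⟩ := aux_coord x hb j' (hθ j')
    change c j' _ = _ at hk
    rw [map_sub, hj1, if_pos rfl] at hk
    have h4 : c j' (P.root θ) = 0 := by simpa using h3
    rw [h4] at hk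
    have : (k : R) + 1 = 0 := by rw [← hk]; ring
    exact Nat.cast_add_one_ne_zero k this
  -- the generator
  obtain ⟨v, hv, hv'⟩ : ∃ v ∈ AddSubgroup.closure (Set.range P.root),
      ∀ j ∈ b.support, ∃ k : ℤ, P.root j - k • v ∈ Z := by
    by_cases h : ∃ j : b.support, 0 < x (P.root j)
    · obtain ⟨j, hj⟩ := h
      refine ⟨P.root j, AddSubgroup.subset_closure ⟨j, rfl⟩, fun k hk => ?_⟩
      rcases (hb k hk).eq_or_lt with h0 | h0
      · exact ⟨0, by simpa using hZ1 k ⟨0, by simp [← h0]⟩⟩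
      · have := huniq ⟨k, hk⟩ j h0 hj
        exact ⟨1, by simp [← this, Z.zero_mem]⟩
    · refine ⟨0, zero_mem _, fun k hk => ⟨0, ?_⟩⟩
      push Not at h
      have h0 := le_antisymm (h ⟨k, hk⟩) (hb k hk)
      simpa using hZ1 k ⟨0, by simp [h0]⟩
  refine ⟨v, hv, fun i => ?_⟩
  have hi := b.root_mem_span_int i
  generalize P.root i = w at hi
  induction hi using Submodule.span_induction with
  | mem w hw => obtain ⟨j, hj, rfl⟩ := hw; exact hv' j hj
  | zero => exact ⟨0, by simp [Z.zero_mem]⟩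
  | add w w' _ _ h1 h2 =>
    obtain ⟨k, hk⟩ := h1
    obtain ⟨l, hl⟩ := h2
    exact ⟨k + l, by convert add_mem hk hl using 1; rw [add_smul]; abel⟩
  | smul a w _ h1 =>
    obtain ⟨k, hk⟩ := h1
    exact ⟨a * k, by convert zsmul_mem hk a using 1; rw [smul_sub, mul_smul]⟩

end RootLemmas2

section CharLemmas
open Module

variable {ι R M N : Type*} [Finite ι] [Field R] [CharZero R] [AddCommGroup M] [Module R M]
  [AddCommGroup N] [Module R N] {P : RootPairing ι R M N} [P.IsCrystallographic] [P.IsReduced]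
  [P.IsRootSystem]

lemma aux_lift (G : AddSubgroup M) (hG : G = AddSubgroup.closure (Set.range P.root))
    (ψ : M → ℂ) (hadd : ∀ v ∈ G, ∀ w ∈ G, ψ (v + w) = ψ v * ψ w)
    (n : ℕ) (hn : 0 < n) (hψ : ∀ v ∈ G, ψ v ^ n = 1) :
    ∃ x : M →+ ℚ, ∀ v ∈ G, (∃ z : ℤ, n * x v = z) ∧
      ψ v = Complex.exp (x v * (2 * Real.pi * Complex.I)) := by
  obtain ⟨ρ, hρ⟩ := aux_retract R
  obtain ⟨b⟩ := P.nonempty_base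
  have hnC : (n : ℂ) ≠ 0 := by exact_mod_cast hn.ne'
  have hnQ : (n : ℚ) ≠ 0 := by exact_mod_cast hn.ne'
  have hroot : ∀ i, P.root i ∈ G := fun i => hG ▸ AddSubgroup.subset_closure ⟨i, rfl⟩
  have h1 : ∀ j : b.support, ∃ k : ℕ,
      ψ (P.root j) = Complex.exp ((k / n : ℚ) * (2 * Real.pi * Complex.I)) := by
    intro j
    haveI : NeZero n := ⟨hn.ne'⟩
    obtain ⟨k, -, hk⟩ := (Complex.isPrimitiveRoot_exp n hn.ne').eq_pow_of_pow_eq_one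
      (hψ _ (hroot j))
    refine ⟨k, ?_⟩
    rw [← hk, ← Complex.exp_nat_mul]
    congr 1
    push_cast
    field_simp
  choose k hk using h1
  let x : M →+ ℚ := ρ.comp
    (b.toWeightBasis.constr R (fun j => (((k j / n : ℚ)) : R))).toAddMonoidHom
  have hx : ∀ j : b.support, x (P.root j) = k j / n := by
    intro j
    have : b.toWeightBasis.constr R (fun j => (((k j / n : ℚ)) : R)) (P.root j)
        = ((k j / n : ℚ) : R) := by
      rw [← b.toWeightBasis_apply, Basis.constr_basis]
    simp only [x, AddMonoidHom.comp_apply, LinearMap.toAddMonoidHom_coe]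
    rw [this, hρ]
  have h00 : ψ 0 = 1 := by
    have h := hadd 0 G.zero_mem 0 G.zero_mem
    have h' := hψ 0 G.zero_mem
    have hne : ψ 0 ≠ 0 := by
      intro h0
      rw [h0, zero_pow hn.ne'] at h'
      exact zero_ne_one h'
    rw [add_zero] at h
    exact mul_left_cancel₀ hne (by rw [← h, mul_one])
  have hGs : G = AddSubgroup.closure (P.root '' b.support) := by
    have h := congrArg Submodule.toAddSubgroup b.span_int_root_support
    rw [Submodule.span_int_eq_addSubgroupClosure, Submodule.span_int_eq_addSubgroupClosure] at h
    rw [hG]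
    simpa using h.symm
  refine ⟨x, fun v hv => ?_⟩
  have key : ∀ v ∈ AddSubgroup.closure (P.root '' b.support), v ∈ G ∧ (∃ z : ℤ, n * x v = z) ∧
      ψ v = Complex.exp (x v * (2 * Real.pi * Complex.I)) := by
    intro v hv
    induction hv using AddSubgroup.closure_induction with
    | mem v hv =>
      obtain ⟨j, hj, rfl⟩ := hv
      refine ⟨hroot j, ⟨k ⟨j, hj⟩, ?_⟩, ?_⟩
      · rw [hx ⟨j, hj⟩]; push_cast; field_simp
      · rw [hk ⟨j, hj⟩, hx ⟨j, hj⟩]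
    | zero => exact ⟨G.zero_mem, ⟨0, by simp⟩, by simp [h00]⟩
    | add v w _ _ hv hw =>
      obtain ⟨a1, ⟨z, hz⟩, e1⟩ := hv
      obtain ⟨a2, ⟨z', hz'⟩, e2⟩ := hw
      refine ⟨G.add_mem a1 a2, ⟨z + z', ?_⟩, ?_⟩
      · rw [map_add, mul_add, hz, hz']; push_cast; rfl
      · rw [hadd _ a1 _ a2, e1, e2, ← Complex.exp_add, map_add]; push_cast; ring_nf
    | neg v _ hv =>
      obtain ⟨a1, ⟨z, hz⟩, e1⟩ := hv
      refine ⟨G.neg_mem a1, ⟨-z, ?_⟩, ?_⟩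
      · rw [map_neg, mul_neg, hz]; push_cast; rfl
      · have h := hadd _ a1 _ (G.neg_mem a1)
        rw [add_neg_cancel, h00, e1] at h
        rw [map_neg]; push_cast
        rw [neg_mul, Complex.exp_neg]
        exact eq_inv_of_mul_eq_one_right h.symm
  exact (key v (hGs ▸ hv)).2

lemma aux_main [P.IsIrreducible]
    (G : AddSubgroup M) (hG : G = AddSubgroup.closure (Set.range P.root))
    (ψ : M → ℂ) (hadd : ∀ v ∈ G, ∀ w ∈ G, ψ (v + w) = ψ v * ψ w)
    (n : ℕ) (hn : 0 < n) (hψ : ∀ v ∈ G, ψ v ^ n = 1)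
    (S : Set M) (hS : S ⊆ Set.range P.root) (hS1 : ∀ v ∈ S, ψ v = 1)
    (hfin : ∀ v ∈ G, n • v ∈ AddSubgroup.closure S)
    (hker : ∀ i, ψ (P.root i) = 1 → P.root i ∈ AddSubgroup.closure S) :
    ∃ v ∈ G, ∀ w ∈ G, ∃ k : ℤ, w - k • v ∈ AddSubgroup.closure S := by
  have hroot : ∀ i, P.root i ∈ G := fun i => hG ▸ AddSubgroup.subset_closure ⟨i, rfl⟩
  obtain ⟨x₀, hx₀⟩ := aux_lift G hG ψ hadd n hn hψ
  obtain ⟨x, hx, hle⟩ := aux_min P x₀ n hn (fun i => (hx₀ _ (hroot i)).1)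
  have hone : ∀ i, ψ (P.root i) = 1 ↔ ∃ z : ℤ, x (P.root i) = z := by
    intro i
    obtain ⟨z, hz⟩ := hx i
    rw [(hx₀ _ (hroot i)).2, Complex.exp_eq_one_iff]
    have hpi : (2 * Real.pi * Complex.I : ℂ) ≠ 0 := Complex.two_pi_I_ne_zero
    constructor
    · rintro ⟨m, hm⟩
      have h := mul_right_cancel₀ hpi hm
      have h' : x₀ (P.root i) = m := by exact_mod_cast h
      exact ⟨m + z, by rw [hz, h']; push_cast; rfl⟩
    · rintro ⟨m, hm⟩
      refine ⟨m - z, ?_⟩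
      have h' : x₀ (P.root i) = ((m - z : ℤ) : ℚ) := by push_cast; linarith
      rw [h']; push_cast; rfl
  obtain ⟨v, hv, hk⟩ := aux_cyclic x hle (AddSubgroup.closure S)
    (fun i hi => hker i ((hone i).2 hi))
    (by
      refine (AddSubgroup.closure_le _).2 fun v hv => ?_
      obtain ⟨i, rfl⟩ := hS hv
      exact AddSubgroup.subset_closure ⟨i, rfl, (hone i).1 (hS1 _ hv)⟩)
    (fun i => ⟨n, hn, hfin _ (hroot i)⟩)
  refine ⟨v, hG ▸ hv, fun w hw => ?_⟩
  rw [hG] at hw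
  induction hw using AddSubgroup.closure_induction with
  | mem w hw => obtain ⟨i, rfl⟩ := hw; exact hk i
  | zero => exact ⟨0, by simp [AddSubgroup.zero_mem]⟩
  | add a b _ _ ha hb =>
    obtain ⟨k, hk⟩ := ha
    obtain ⟨l, hl⟩ := hb
    refine ⟨k + l, ?_⟩
    have := AddSubgroup.add_mem _ hk hl
    rwa [show a - k • v + (b - l • v) = a + b - (k + l) • v by rw [add_smul]; abel] at this
  | neg a _ ha =>
    obtain ⟨k, hk⟩ := ha
    refine ⟨-k, ?_⟩
    have := AddSubgroup.neg_mem _ hk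
    rwa [show -(a - k • v) = -a - (-k) • v by rw [neg_smul]; abel] at this

end CharLemmas

lemma aux_lieRoots (L : Type*) [LieRing L] [LieAlgebra ℂ L] [FiniteDimensional ℂ L]
    [LieAlgebra.IsSimple ℂ L] (H : LieSubalgebra ℂ L) [H.IsCartanSubalgebra] :
    lieRoots L H = Set.range (LieAlgebra.IsKilling.rootSystem H).root := by
  ext α
  constructor
  · rintro ⟨h0, h1⟩
    let w : LieModule.Weight ℂ H L := ⟨⇑α, h1⟩
    have hw : w.toLinear = α := by ext y; rfl
    have hm : w ∈ H.root := by
      have : w.IsNonZero := by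
        rw [← LieModule.Weight.coe_toLinear_ne_zero_iff, hw]; exact h0
      simpa [LieSubalgebra.root] using this
    exact ⟨⟨w, hm⟩, hw⟩
  · rintro ⟨w, rfl⟩
    refine ⟨?_, w.1.genWeightSpace_ne_bot'⟩
    rw [LieAlgebra.IsKilling.rootSystem_root_apply, LieModule.Weight.coe_toLinear_ne_zero_iff]
    exact H.isNonZero_coe_root w

/-- If `𝔤` is simple and `Γ_𝔨` is finite non-cyclic, then the kernel of every character
`χ : Γ_𝔨 → ℂ∖{0}` contains a nonzero image of a root. -/
theorem finite_noncyclic_character_kernel_contains_root_image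
    (L : Type*) [LieRing L] [LieAlgebra ℂ L] [FiniteDimensional ℂ L]
    [LieAlgebra.IsSimple ℂ L]
    (H : LieSubalgebra ℂ L) [H.IsCartanSubalgebra]
    (P : Set (Module.Dual ℂ H))
    (hP : IsClosedSymmetricSubsystem (lieRoots L H) P)
    (hfin : Finite (GammaK L H P))
    (hnc : ¬ IsAddCyclic (GammaK L H P))
    (χ : GammaK L H P → ℂ)
    (hmul : ∀ x y, χ (x + y) = χ x * χ y)
    (hne : ∀ x, χ x ≠ 0) :
    ∃ (α : Module.Dual ℂ H) (hα : α ∈ lieRoots L H),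
      rootImage L H P hα ≠ 0 ∧ χ (rootImage L H P hα) = 1 := by
  classical
  by_contra hcon
  apply hnc
  have hR := aux_lieRoots L H
  let G := AddSubgroup.closure (lieRoots L H)
  let q : ∀ v, v ∈ G → GammaK L H P := fun v hv => QuotientAddGroup.mk ⟨v, hv⟩
  have hq0 : ∀ v (hv : v ∈ G), q v hv = 0 ↔ v ∈ AddSubgroup.closure P := by
    intro v hv
    simp only [q]
    rw [QuotientAddGroup.eq_zero_iff, AddSubgroup.mem_addSubgroupOf]
  have hχ0 : χ 0 = 1 := by
    have h := hmul 0 0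
    rw [add_zero] at h
    exact mul_left_cancel₀ (hne 0) (by rw [← h, mul_one])
  have hpow : ∀ (g : GammaK L H P) (m : ℕ), χ (m • g) = χ g ^ m := by
    intro g m
    induction m with
    | zero => simp [hχ0]
    | succ m ih => rw [succ_nsmul, hmul, ih, pow_succ]
  let ψ : Module.Dual ℂ H → ℂ := fun v => if hv : v ∈ G then χ (q v hv) else 1
  have hψ : ∀ v (hv : v ∈ G), ψ v = χ (q v hv) := fun v hv => dif_pos hv
  obtain ⟨v, hv, hk⟩ := aux_main (P := LieAlgebra.IsKilling.rootSystem H) G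
    (by simp only [G]; rw [hR]) ψ
    (fun v hv w hw => by
      rw [hψ v hv, hψ w hw, hψ _ (G.add_mem hv hw), ← hmul]; rfl)
    (Nat.card (GammaK L H P)) Nat.card_pos
    (fun v hv => by rw [hψ v hv, ← hpow, card_nsmul_eq_zero', hχ0])
    P (hR ▸ hP.1)
    (fun v hv => by
      have hvG : v ∈ G := AddSubgroup.subset_closure (hP.1 hv)
      rw [hψ v hvG, (hq0 v hvG).2 (AddSubgroup.subset_closure hv), hχ0])
    (fun v hv => by
      rw [← hq0 _ (G.nsmul_mem hv _)]
      exact card_nsmul_eq_zero' (x := q v hv))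
    (fun i hi => by
      have hα : (LieAlgebra.IsKilling.rootSystem H).root i ∈ lieRoots L H := hR ▸ ⟨i, rfl⟩
      have hG : (LieAlgebra.IsKilling.rootSystem H).root i ∈ G := AddSubgroup.subset_closure hα
      rw [hψ _ hG] at hi
      rw [← hq0 _ hG]
      by_contra h
      exact hcon ⟨_, hα, h, hi⟩)
  refine ⟨⟨q v hv, fun g => ?_⟩⟩
  obtain ⟨⟨w, hw⟩, rfl⟩ := QuotientAddGroup.mk_surjective g
  obtain ⟨k, hk⟩ := hk w hw
  refine ⟨k, ?_⟩
  have h := (hq0 _ (G.sub_mem hw (G.zsmul_mem hv k))).2 hk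
  have h2 : q w hw - k • q v hv = 0 := h
  exact (sub_eq_zero.1 h2).symm
end
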